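/- arXiv:1810.12415 — 2 statements merged into one kernel-verified Lean document; each statement's English description precedes it below -/
import Mathlib

section
/- A language is context-free if and only if it is recognized by an F₂-automaton, if and only if it is recognized by an SL(2,ℤ)-automaton, if and only if it is recognized by a GL(2,ℤ)-automaton; that is, CF = 𝔏(F₂) = 𝔏(SL(2,ℤ)) = 𝔏(GL(2,ℤ)). -/
/-- A `G`-automaton over input alphabet `α`: a nondeterministic finite automaton
equipped with a register holding an element of the group `G`. -/
structure GAutomaton (α : Type*) (G : Type*) [Group G] where
  /-- the (finite) state set -/
  Q : Type
  finQ : Finite Q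
  /-- the initial state -/
  q0 : Q
  /-- the accepting states -/
  acc : Set Q
  /-- the (finite) transition relation; `none` stands for ε -/
  δ : Set (Q × Option α × Q × G)
  finδ : δ.Finite

namespace GAutomaton

variable {α : Type*} {G : Type*} [Group G]

/-- One computation step between configurations `(state, register, remaining input)`. -/
def Step (M : GAutomaton α G) (c c' : M.Q × G × List α) : Prop :=
  ∃ σ m, (c.1, σ, c'.1, m) ∈ M.δ ∧ c'.2.1 = c.2.1 * m ∧
    match σ with
    | none => c'.2.2 = c.2.2
    | some s => c.2.2 = s :: c'.2.2

/-- `M.StepsIn k c c'` : configuration `c'` is reachable from `c` in exactly `k` steps. -/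
def StepsIn (M : GAutomaton α G) : ℕ → (M.Q × G × List α) → (M.Q × G × List α) → Prop
  | 0, c, c' => c = c'
  | n + 1, c, c' => ∃ d, M.Step c d ∧ M.StepsIn n d c'

/-- `M` accepts the word `w` within `t` computation steps. -/
def AcceptsIn (M : GAutomaton α G) (w : List α) (t : ℕ) : Prop :=
  ∃ k ≤ t, ∃ q ∈ M.acc, M.StepsIn k (M.q0, 1, w) (q, 1, [])

/-- The language recognized by `M`. -/
def lang (M : GAutomaton α G) : Language α := {w | ∃ t, M.AcceptsIn w t}

/-- `M` is real-time if every transition consumes an input symbol. -/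
def RealTime (M : GAutomaton α G) : Prop := ∀ tr ∈ M.δ, tr.2.1 ≠ none

end GAutomaton

/-- `L ∈ 𝔏(G)` : the language `L` is recognized by some `G`-automaton. -/
def GRecognizable (G : Type*) [Group G] {α : Type*} (L : Language α) : Prop :=
  ∃ M : GAutomaton α G, M.lang = L

/-- `L ∈ 𝔏(G)ʷ_{t(n)}` : `L` is recognized by a weakly `t(n)` time-bounded `G`-automaton. -/
def GRecognizableInTime (G : Type*) [Group G] {α : Type*} (L : Language α) (t : ℕ → ℕ) : Prop :=
  ∃ M : GAutomaton α G, M.lang = L ∧ ∀ w ∈ L, M.AcceptsIn w (t w.length)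

/-- `L ∈ 𝔏(G)ʷ_{O(n)}` : `L` is recognized by a weakly linear-time bounded `G`-automaton. -/
def GRecognizableLinTime (G : Type*) [Group G] {α : Type*} (L : Language α) : Prop :=
  ∃ C : ℕ, GRecognizableInTime G L (fun n => C * n + C)

/-! ### Paths in `G`-automata -/

namespace GAutomaton

section Path

variable {α : Type*} {G : Type*} [Group G]

/-- `M.Path p l w q`: the automaton `M` can go from `p` to `q` reading the word `w`, the successive
transitions multiplying the register by the elements of `l`. -/
inductive Path (M : GAutomaton α G) : M.Q → List G → List α → M.Q → Prop
  | nil (p : M.Q) : M.Path p [] [] p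
  | cons {p r q : M.Q} {σ : Option α} {m : G} {l : List G} {w : List α}
      (h : (p, σ, r, m) ∈ M.δ) (hp : M.Path r l w q) : M.Path p (m :: l) (σ.toList ++ w) q

variable {M : GAutomaton α G}

lemma StepsIn.exists_path {k : ℕ} {p q : M.Q} {x y : G} {w : List α}
    (h : M.StepsIn k (p, x, w) (q, y, [])) : ∃ l, M.Path p l w q ∧ x * l.prod = y := by
  induction k generalizing p x w with
  | zero =>
    obtain ⟨rfl, rfl, rfl⟩ : p = q ∧ x = y ∧ w = [] := by simpa [StepsIn] using h
    exact ⟨[], .nil p, by simp⟩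
  | succ k ih =>
    obtain ⟨⟨r, x', w'⟩, ⟨σ, m, hδ, hx, hw⟩, hk⟩ := h
    obtain ⟨l, hl, hprod⟩ := ih hk
    simp only at hδ hx hw
    have hw' : w = σ.toList ++ w' := by
      cases σ <;> simp_all
    subst hw' hx
    exact ⟨m :: l, .cons hδ hl, by simpa [mul_assoc] using hprod⟩

lemma Path.stepsIn {p q : M.Q} {l : List G} {w : List α} (h : M.Path p l w q) (x : G) :
    M.StepsIn l.length (p, x, w) (q, x * l.prod, []) := by
  induction h generalizing x with
  | nil p => simp [StepsIn]
  | @cons p r q σ m l w h hp ih =>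
    refine ⟨(r, x * m, w), ⟨σ, m, h, rfl, ?_⟩, by simpa [mul_assoc] using ih (x * m)⟩
    cases σ <;> simp

lemma mem_lang_iff {w : List α} :
    w ∈ M.lang ↔ ∃ q ∈ M.acc, ∃ l, M.Path M.q0 l w q ∧ l.prod = 1 := by
  constructor
  · rintro ⟨t, k, -, q, hq, h⟩
    obtain ⟨l, hl, hprod⟩ := h.exists_path
    exact ⟨q, hq, l, hl, by simpa using hprod⟩
  · rintro ⟨q, hq, l, hl, hprod⟩
    exact ⟨l.length, l.length, le_rfl, q, hq, by simpa [hprod] using hl.stepsIn 1⟩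

lemma Path.exists_of_append {p q : M.Q} {l₁ l₂ : List G} {w : List α}
    (h : M.Path p (l₁ ++ l₂) w q) :
    ∃ r w₁ w₂, w = w₁ ++ w₂ ∧ M.Path p l₁ w₁ r ∧ M.Path r l₂ w₂ q := by
  induction l₁ generalizing p w with
  | nil => exact ⟨p, [], w, rfl, .nil p, h⟩
  | cons m l₁ ih =>
    cases h with
    | cons hδ hp =>
      obtain ⟨r, w₁, w₂, rfl, h₁, h₂⟩ := ih hp
      exact ⟨r, _, w₂, (List.append_assoc ..).symm, .cons hδ h₁, h₂⟩

lemma Path.append {p r q : M.Q} {l₁ l₂ : List G} {w₁ w₂ : List α}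
    (h₁ : M.Path p l₁ w₁ r) (h₂ : M.Path r l₂ w₂ q) : M.Path p (l₁ ++ l₂) (w₁ ++ w₂) q := by
  induction h₁ with
  | nil p => simpa using h₂
  | cons h hp ih => simpa using Path.cons h (ih h₂)

lemma Path.exists_mem_of_mem {p q : M.Q} {l : List G} {w : List α} (h : M.Path p l w q) {m : G}
    (hm : m ∈ l) : ∃ t ∈ M.δ, t.2.2.2 = m := by
  induction h with
  | nil p => simp at hm
  | cons h hp ih =>
    rcases List.mem_cons.mp hm with rfl | hm
    · exact ⟨_, h, rfl⟩
    · exact ih hm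

end Path

section Transfer

variable {α : Type*} {G H : Type*} [Group G] [Group H]

/-- The automaton obtained by applying a homomorphism to the register operations. -/
def mapGroup (φ : G →* H) (M : GAutomaton α G) : GAutomaton α H where
  Q := M.Q
  finQ := M.finQ
  q0 := M.q0
  acc := M.acc
  δ := (fun t => (t.1, t.2.1, t.2.2.1, φ t.2.2.2)) '' M.δ
  finδ := M.finδ.image _

lemma mapGroup_path {φ : G →* H} {M : GAutomaton α G} {p q : M.Q} {l : List G} {w : List α}
    (h : M.Path p l w q) : (M.mapGroup φ).Path p (l.map φ) w q := by
  induction h with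
  | nil p => exact .nil (M := M.mapGroup φ) p
  | cons h hp ih => exact .cons (M := M.mapGroup φ) ⟨_, h, rfl⟩ ih

lemma exists_path_of_mapGroup {φ : G →* H} {M : GAutomaton α G} {p q : (M.mapGroup φ).Q}
    {l : List H} {w : List α} (h : (M.mapGroup φ).Path p l w q) :
    ∃ l', M.Path p l' w q ∧ l = l'.map φ := by
  induction h with
  | nil p => exact ⟨[], .nil (M := M) p, rfl⟩
  | cons h hp ih =>
    obtain ⟨l', hl', rfl⟩ := ih
    obtain ⟨⟨p', σ', r', m'⟩, hδ, heq⟩ := h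
    obtain ⟨rfl, rfl, rfl, rfl⟩ := by simpa using heq
    exact ⟨m' :: l', .cons hδ hl', rfl⟩

end Transfer

section Coset

variable {α : Type*} {G H : Type} [Group G] [Group H]

/-- Given an injective homomorphism `φ : H →* G` and a finite set `R ⊆ G`, the automaton over `H`
that simulates the register `φ h * r` of `M` by the register `h` and the state component `r ∈ R`. -/
def cosetAutomaton (φ : H →* G) (hφ : Function.Injective φ) {R : Set G} (hR : R.Finite)
    (one_mem : 1 ∈ R) (M : GAutomaton α G) : GAutomaton α H where
  Q := M.Q × R
  finQ := by
    have := M.finQ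
    have := hR.to_subtype
    infer_instance
  q0 := (M.q0, ⟨1, one_mem⟩)
  acc := {s | s.1 ∈ M.acc ∧ s.2.1 = 1}
  δ := {t | (t.1.1, t.2.1, t.2.2.1.1, (t.1.2 : G)⁻¹ * φ t.2.2.2 * t.2.2.1.2) ∈ M.δ}
  finδ := by
    have := hR.to_subtype
    have hfin : (M.δ ×ˢ (Set.univ : Set (R × R))).Finite := M.finδ.prod Set.finite_univ
    refine (hfin.preimage (f := fun t : (M.Q × R) × Option α × (M.Q × R) × H =>
      ((t.1.1, t.2.1, t.2.2.1.1, (t.1.2 : G)⁻¹ * φ t.2.2.2 * t.2.2.1.2), (t.1.2, t.2.2.1.2)))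
      ?_).subset fun t ht => ⟨ht, Set.mem_univ _⟩
    rintro ⟨⟨p, r⟩, σ, ⟨q, r'⟩, h⟩ - ⟨⟨p₁, r₁⟩, σ₁, ⟨q₁, r₁'⟩, h₁⟩ - heq
    simp only [Prod.mk.injEq] at heq
    obtain ⟨⟨rfl, rfl, rfl, hh⟩, rfl, rfl⟩ := heq
    simp [hφ (mul_left_cancel (mul_right_cancel hh))]

variable {φ : H →* G} {hφ : Function.Injective φ} {R : Set G} {hR : R.Finite} {one_mem : 1 ∈ R}
  {M : GAutomaton α G}

lemma exists_path_of_cosetAutomaton {p q : (M.cosetAutomaton φ hφ hR one_mem).Q} {l : List H}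
    {w : List α} (h : (M.cosetAutomaton φ hφ hR one_mem).Path p l w q) :
    ∃ l', M.Path p.1 l' w q.1 ∧ (p.2 : G) * l'.prod = φ l.prod * q.2 := by
  induction h with
  | nil p => exact ⟨[], .nil _, by simp⟩
  | cons h hp ih =>
    obtain ⟨l', hl', hprod⟩ := ih
    refine ⟨_, .cons h hl', ?_⟩
    simp only [List.prod_cons, map_mul, mul_assoc, ← hprod]
    simp

lemma cosetAutomaton_path {f : G → H} {ρ : G → R} (hdec : ∀ x, φ (f x) * ρ x = x)
    {p q : M.Q} {l : List G} {w : List α} (h : M.Path p l w q) (x : G) :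
    ∃ l', (M.cosetAutomaton φ hφ hR one_mem).Path (p, ρ x) l' w (q, ρ (x * l.prod)) ∧
      f x * l'.prod = f (x * l.prod) := by
  induction h generalizing x with
  | nil p => exact ⟨[], by simpa using Path.nil (M := M.cosetAutomaton φ hφ hR one_mem) (p, ρ x),
      by simp⟩
  | @cons p r q σ m l w h hp ih =>
    obtain ⟨l', hl', hprod⟩ := ih (x * m)
    refine ⟨(f x)⁻¹ * f (x * m) :: l', ?_, by simpa [mul_assoc] using hprod⟩
    have hm : ((ρ x : G))⁻¹ * φ ((f x)⁻¹ * f (x * m)) * ρ (x * m) = m := by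
      rw [map_mul, map_inv, ← mul_assoc, mul_assoc _ (φ (f (x * m))), hdec, ← mul_inv_rev, hdec]
      simp
    rw [List.prod_cons, ← mul_assoc]
    refine Path.cons (M := M.cosetAutomaton φ hφ hR one_mem) (r := (r, ρ (x * m))) ?_ hl'
    change (_, _, _, _) ∈ M.δ
    rwa [hm]

end Coset

end GAutomaton

lemma GRecognizable.map {α : Type*} {G H : Type*} [Group G] [Group H] {L : Language α}
    (h : GRecognizable G L) (φ : G →* H) (hφ : Function.Injective φ) : GRecognizable H L := by
  obtain ⟨M, rfl⟩ := h
  refine ⟨M.mapGroup φ, ?_⟩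
  ext w
  rw [GAutomaton.mem_lang_iff, GAutomaton.mem_lang_iff]
  constructor
  · rintro ⟨q, hq, l, hl, hprod⟩
    obtain ⟨l', hl', rfl⟩ := GAutomaton.exists_path_of_mapGroup hl
    exact ⟨q, hq, l', hl', hφ (by simpa [map_list_prod] using hprod)⟩
  · rintro ⟨q, hq, l, hl, hprod⟩
    exact ⟨q, hq, l.map φ, GAutomaton.mapGroup_path hl, by rw [← map_list_prod, hprod, map_one]⟩

lemma GRecognizable.of_forall_exists_mul {α : Type*} {G H : Type} [Group G] [Group H]
    {L : Language α} (h : GRecognizable G L) (φ : H →* G) (hφ : Function.Injective φ) {R : Set G}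
    (hR : R.Finite) (hdec : ∀ x, ∃ y, ∃ r ∈ R, x = φ y * r) : GRecognizable H L := by
  classical
  obtain ⟨M, rfl⟩ := h
  choose f ρ hρ hfρ using hdec
  let f' : G → H := Function.update f 1 1
  let ρ' : G → (insert 1 R : Set G) :=
    Function.update (fun x => ⟨ρ x, Set.mem_insert_of_mem _ (hρ x)⟩) 1 ⟨1, Set.mem_insert _ _⟩
  have hdec' : ∀ x, φ (f' x) * ρ' x = x := by
    intro x
    by_cases hx : x = 1
    · simp [f', ρ', hx]
    · simp [f', ρ', hx, ← hfρ]
  refine ⟨M.cosetAutomaton φ hφ (hR.insert 1) (Set.mem_insert _ _), ?_⟩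
  ext w
  rw [GAutomaton.mem_lang_iff, GAutomaton.mem_lang_iff]
  constructor
  · rintro ⟨⟨q, r⟩, ⟨hq, hr⟩, l, hl, hprod⟩
    obtain ⟨l', hl', hprod'⟩ := GAutomaton.exists_path_of_cosetAutomaton hl
    refine ⟨q, hq, l', hl', ?_⟩
    have hr' : (r : G) = 1 := hr
    simpa [GAutomaton.cosetAutomaton, hprod, hr'] using hprod'
  · rintro ⟨q, hq, l, hl, hprod⟩
    obtain ⟨l', hl', hprod'⟩ := GAutomaton.cosetAutomaton_path (hφ := hφ) (hR := hR.insert 1)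
      (one_mem := Set.mem_insert _ _) hdec' hl 1
    rw [hprod, mul_one] at hl' hprod'
    have hρ1 : ρ' 1 = ⟨1, Set.mem_insert _ _⟩ := by simp [ρ']
    rw [hρ1] at hl'
    exact ⟨_, ⟨hq, rfl⟩, l', hl', by simpa using hprod'⟩

/-! ### Leftmost derivations of context-free grammars -/

namespace ContextFreeGrammar

variable {T : Type*}

/-- `g.LeftGen u w`: the word `w` is obtained from the sentential form `u` by a leftmost
derivation. -/
inductive LeftGen (g : ContextFreeGrammar T) : List (Symbol T g.NT) → List T → Prop
  | nil : g.LeftGen [] []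
  | terminal (t : T) {u : List (Symbol T g.NT)} {w : List T} (h : g.LeftGen u w) :
      g.LeftGen (.terminal t :: u) (t :: w)
  | rule {r : ContextFreeRule T g.NT} (hr : r ∈ g.rules) {u : List (Symbol T g.NT)} {w : List T}
      (h : g.LeftGen (r.output ++ u) w) : g.LeftGen (.nonterminal r.input :: u) w

variable {g : ContextFreeGrammar T}

lemma LeftGen.derives {u : List (Symbol T g.NT)} {w : List T} (h : g.LeftGen u w) :
    g.Derives u (w.map .terminal) := by
  induction h with
  | nil => exact .refl _
  | terminal t h ih => exact ih.append_left [.terminal t]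
  | rule hr h ih => exact Produces.trans_derives ⟨_, hr, .head _⟩ ih

lemma leftGen_map_terminal (w : List T) : g.LeftGen (w.map .terminal) w := by
  induction w with
  | nil => exact .nil
  | cons t w ih => exact .terminal t ih

lemma LeftGen.of_rule {r : ContextFreeRule T g.NT} (hr : r ∈ g.rules)
    {p q : List (Symbol T g.NT)} {w : List T} (h : g.LeftGen (p ++ r.output ++ q) w) :
    g.LeftGen (p ++ [.nonterminal r.input] ++ q) w := by
  generalize hv : p ++ r.output ++ q = v at h
  induction h generalizing p with
  | nil =>
    obtain rfl : p = [] := by simp_all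
    refine .rule hr (u := q) ?_
    rw [← List.nil_append r.output, hv]
    exact .nil
  | @terminal t u w h ih =>
    rcases p with - | ⟨a, p⟩
    · refine .rule hr (u := q) ?_
      rw [← List.nil_append r.output, hv]
      exact .terminal t h
    · simp only [List.cons_append, List.cons.injEq] at hv
      obtain ⟨rfl, hv⟩ := hv
      exact .terminal t (ih hv)
  | @rule r' hr' u w h ih =>
    rcases p with - | ⟨a, p⟩
    · refine .rule hr (u := q) ?_
      rw [← List.nil_append r.output, hv]
      exact .rule hr' h
    · simp only [List.cons_append, List.cons.injEq] at hv
      obtain ⟨rfl, hv⟩ := hv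
      refine .rule hr' ?_
      have := ih (p := r'.output ++ p) (by simp [← hv])
      simpa using this

lemma leftGen_iff_derives {u : List (Symbol T g.NT)} {w : List T} :
    g.LeftGen u w ↔ g.Derives u (w.map .terminal) := by
  refine ⟨LeftGen.derives, fun h => ?_⟩
  induction h using Relation.ReflTransGen.head_induction_on with
  | refl => exact leftGen_map_terminal w
  | head h _ ih =>
    obtain ⟨r, hr, hrw⟩ := h
    obtain ⟨p, q, rfl, rfl⟩ := hrw.exists_parts
    exact .of_rule hr ih

lemma mem_language_iff_leftGen {w : List T} :
    w ∈ g.language ↔ g.LeftGen [.nonterminal g.initial] w := by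
  rw [mem_language_iff, leftGen_iff_derives]

/-- An interpretation of symbols by languages which is closed under all rules of `g` contains all
words generated by `g`. -/
lemma LeftGen.mem_prod {I : Symbol T g.NT → Language T} (hterm : ∀ t, [t] ∈ I (.terminal t))
    (hrule : ∀ r ∈ g.rules, (r.output.map I).prod ≤ I (.nonterminal r.input))
    {u : List (Symbol T g.NT)} {w : List T} (h : g.LeftGen u w) : w ∈ (u.map I).prod := by
  induction h with
  | nil => simp
  | terminal t h ih => exact Language.append_mem_mul (hterm t) ih
  | rule hr h ih =>
    rw [List.map_append, List.prod_append] at ih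
    rw [List.map_cons, List.prod_cons]
    exact mul_le_mul_left (hrule _ hr) _ ih

lemma Derives.append {u₁ u₂ v₁ v₂ : List (Symbol T g.NT)} (h₁ : g.Derives u₁ v₁)
    (h₂ : g.Derives u₂ v₂) : g.Derives (u₁ ++ u₂) (v₁ ++ v₂) :=
  (h₁.append_right u₂).trans (h₂.append_left v₁)

end ContextFreeGrammar

/-! ### Triangulation in free groups -/

namespace FreeGroup

variable {X : Type*} [DecidableEq X]

lemma toWord_mk_singleton_mul (s : X × Bool) (x : FreeGroup X) :
    (mk [s] * x).toWord = s :: x.toWord ∨ ∃ a, x.toWord = a :: (mk [s] * x).toWord := by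
  have h : (mk [s] * x).toWord = reduce (s :: x.toWord) := by
    rw [← toWord_mk, ← List.singleton_append (l := x.toWord), ← mul_mk, mk_toWord]
  rw [h, reduce.cons, reduce_toWord]
  cases x.toWord with
  | nil => simp
  | cons a t =>
    by_cases hc : s.1 = a.1 ∧ s.2 = !a.2
    · right; exact ⟨a, by simp [hc]⟩
    · left; simp [hc]

/-- A walk in the Cayley graph which enters the set of words with suffix `y` visits `y`. -/
lemma exists_append_mk_mul_eq {y : List (X × Bool)} {x : FreeGroup X} {v : List (X × Bool)}
    (hx : ¬ y <:+ x.toWord) (hv : y <:+ (mk v * x).toWord) :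
    ∃ v₁ v₂, v = v₁ ++ v₂ ∧ mk y = mk v₂ * x := by
  induction v with
  | nil => exact absurd (by simpa [← one_eq_mk] using hv) hx
  | cons s v ih =>
    by_cases h : y <:+ (mk v * x).toWord
    · obtain ⟨v₁, v₂, rfl, hy⟩ := ih h
      exact ⟨s :: v₁, v₂, rfl, hy⟩
    · refine ⟨[], s :: v, rfl, ?_⟩
      have hs : mk (s :: v) * x = mk [s] * (mk v * x) := by
        rw [← mul_assoc, mul_mk, List.singleton_append]
      rw [hs] at hv ⊢
      rcases toWord_mk_singleton_mul s (mk v * x) with h' | ⟨a, h'⟩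
      · rw [h', List.suffix_cons_iff] at hv
        rcases hv with hv | hv
        · rw [hv, ← h', mk_toWord]
        · exact absurd hv h
      · exact absurd (h' ▸ hv.trans (List.suffix_cons _ _)) h

lemma exists_split_of_suffix {y : List (X × Bool)} (hy : y ≠ []) {l : List (FreeGroup X)}
    (h : y <:+ l.prod.toWord) :
    ∃ l₁ m l₂ t, l = l₁ ++ m :: l₂ ∧ (m :: l₂).prod = t * mk y ∧ norm t ≤ norm m := by
  induction l with
  | nil => simp_all
  | cons m l ih =>
    by_cases hl : y <:+ l.prod.toWord
    · obtain ⟨l₁, m', l₂, t, rfl, ht⟩ := ih hl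
      exact ⟨m :: l₁, m', l₂, t, rfl, ht⟩
    · rw [List.prod_cons, ← mk_toWord (x := m)] at h
      obtain ⟨v₁, v₂, hv, hy⟩ := exists_append_mk_mul_eq hl h
      refine ⟨[], m, l, mk v₁, rfl, ?_, ?_⟩
      · rw [hy, ← mul_assoc, mul_mk, ← hv, mk_toWord, List.prod_cons]
      · refine norm_mk_le.trans ?_
        rw [norm, hv, List.length_append]
        exact Nat.le_add_right _ _

/-- Closed polygons in the Cayley graph of a free group can be triangulated by diagonals of bounded
length. -/
lemma exists_split_of_norm_le {c : ℕ} {l : List (FreeGroup X)} (hl : 2 ≤ l.length)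
    (hc : ∀ m ∈ l, norm m ≤ c) (hprod : norm l.prod ≤ 3 * c) :
    ∃ l₁ l₂, l₁ ≠ [] ∧ l₂ ≠ [] ∧ l = l₁ ++ l₂ ∧ norm l₁.prod ≤ 3 * c ∧ norm l₂.prod ≤ 3 * c := by
  by_cases hsmall : norm l.prod ≤ 2 * c
  · match l, hl with
    | a :: b :: l, _ =>
      have ha : norm a ≤ c := hc a (by simp)
      refine ⟨[a], b :: l, by simp, by simp, rfl, by simp; omega, ?_⟩
      have : (b :: l).prod = a⁻¹ * (a :: b :: l).prod := by simp
      rw [this]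
      have := norm_mul_le a⁻¹ (a :: b :: l).prod
      rw [norm_inv_eq] at this
      omega
  · push Not at hsmall
    set z := l.prod.toWord with hz
    have hzlen : norm l.prod = z.length := rfl
    have hydrop : z = z.take (z.length - c) ++ z.drop (z.length - c) := by simp
    set y := z.drop (z.length - c) with hy
    set y' := z.take (z.length - c) with hy'
    have hylen : y.length = c := by simp [hy]; omega
    have hylen' : y'.length = z.length - c := by simp [hy']
    by_cases hc0 : c = 0
    · have := hc0 ▸ hprod
      omega
    obtain ⟨l₁, m, l₂, t, rfl, hsuf, ht⟩ := exists_split_of_suffix (y := y) (l := l)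
      (by rintro h; simp [h] at hylen; omega) (List.drop_suffix _ _)
    have hm := hc m (by simp)
    have htot : (l₁ ++ m :: l₂).prod = mk y' * mk y := by
      rw [mul_mk, ← hydrop, hz, mk_toWord]
    have hl₁ : l₁.prod = mk y' * t⁻¹ := by
      rw [List.prod_append, hsuf, ← mul_assoc] at htot
      rw [← mul_right_cancel htot]
      simp
    have h₂ : norm (m :: l₂).prod ≤ 2 * c := by
      rw [hsuf]
      have := norm_mul_le t (mk y)
      have := norm_mk_le (L₁ := y)
      omega
    refine ⟨l₁, m :: l₂, ?_, by simp, rfl, ?_, by omega⟩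
    · rintro rfl
      rw [List.nil_append] at hsmall
      omega
    · rw [hl₁]
      have := norm_mul_le (mk y') t⁻¹
      have := norm_mk_le (L₁ := y')
      rw [norm_inv_eq] at *
      omega

lemma finite_norm_le [Finite X] (n : ℕ) : {x : FreeGroup X | norm x ≤ n}.Finite :=
  ((List.finite_length_le (X × Bool) n).image mk).subset
    fun x hx => ⟨x.toWord, hx, mk_toWord⟩

end FreeGroup

/-! ### Languages of automata over free groups are context-free -/

namespace GAutomaton

variable {α : Type*} {G : Type} [Group G]

/-- The rules of the triple grammar of `M` relative to `K`. The nonterminal `some (p, x, q)` generates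
words read by paths from `p` to `q` that multiply the register by `x`. -/
inductive TripleRule (M : GAutomaton α G) (K : Set G) :
    ContextFreeRule α (Option (M.Q × G × M.Q)) → Prop
  | start {q : M.Q} (hq : q ∈ M.acc) :
      M.TripleRule K ⟨none, [.nonterminal (some (M.q0, 1, q))]⟩
  | empty (p : M.Q) : M.TripleRule K ⟨some (p, 1, p), []⟩
  | read {p q : M.Q} {σ : Option α} {m : G} (h : (p, σ, q, m) ∈ M.δ) :
      M.TripleRule K ⟨some (p, m, q), σ.toList.map .terminal⟩
  | comp (p r q : M.Q) {x y : G} (hx : x ∈ K) (hy : y ∈ K) :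
      M.TripleRule K ⟨some (p, x * y, q),
        [.nonterminal (some (p, x, r)), .nonterminal (some (r, y, q))]⟩

lemma finite_tripleRule (M : GAutomaton α G) {K : Set G} (hK : K.Finite) :
    {r | M.TripleRule K r}.Finite := by
  have := M.finQ
  have := hK.to_subtype
  have := M.finδ.to_subtype
  let start (q : M.Q) : ContextFreeRule α (Option (M.Q × G × M.Q)) :=
    ⟨none, [.nonterminal (some (M.q0, 1, q))]⟩
  let empty (p : M.Q) : ContextFreeRule α (Option (M.Q × G × M.Q)) := ⟨some (p, 1, p), []⟩
  let read (t : M.δ) : ContextFreeRule α (Option (M.Q × G × M.Q)) :=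
    ⟨some (t.1.1, t.1.2.2.2, t.1.2.2.1), t.1.2.1.toList.map .terminal⟩
  let comp (t : M.Q × M.Q × M.Q × K × K) : ContextFreeRule α (Option (M.Q × G × M.Q)) :=
    ⟨some (t.1, t.2.2.2.1 * t.2.2.2.2, t.2.2.1),
      [.nonterminal (some (t.1, t.2.2.2.1, t.2.1)),
        .nonterminal (some (t.2.1, t.2.2.2.2, t.2.2.1))]⟩
  refine ((((Set.finite_range start).union (Set.finite_range empty)).union
    (Set.finite_range read)).union (Set.finite_range comp)).subset ?_
  rintro r (⟨hq⟩ | p | h | ⟨p, s, q, hx, hy⟩)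
  · exact .inl (.inl (.inl ⟨_, rfl⟩))
  · exact .inl (.inl (.inr ⟨p, rfl⟩))
  · exact .inl (.inr ⟨⟨_, h⟩, rfl⟩)
  · exact .inr ⟨(p, s, q, ⟨_, hx⟩, ⟨_, hy⟩), rfl⟩

/-- The triple grammar of `M` relative to a finite set `K` of register values. -/
noncomputable def tripleGrammar (M : GAutomaton α G) {K : Set G} (hK : K.Finite) :
    ContextFreeGrammar α where
  NT := Option (M.Q × G × M.Q)
  initial := none
  rules := (M.finite_tripleRule hK).toFinset

variable {M : GAutomaton α G} {K : Set G} {hK : K.Finite}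

lemma mem_rules_tripleGrammar {r : ContextFreeRule α (Option (M.Q × G × M.Q))} :
    r ∈ (M.tripleGrammar hK).rules ↔ M.TripleRule K r :=
  (M.finite_tripleRule hK).mem_toFinset

/-- The words generated by the symbols of the triple grammar. -/
def tripleLang (M : GAutomaton α G) : Symbol α (Option (M.Q × G × M.Q)) → Language α
  | .terminal t => {[t]}
  | .nonterminal none => M.lang
  | .nonterminal (some (p, x, q)) => {w | ∃ l, M.Path p l w q ∧ l.prod = x}

lemma TripleRule.prod_le {r : ContextFreeRule α (Option (M.Q × G × M.Q))}
    (hr : M.TripleRule K r) :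
    (r.output.map M.tripleLang).prod ≤ M.tripleLang (.nonterminal r.input) := by
  intro w hw
  change w ∈ (r.output.map M.tripleLang).prod at hw
  rcases hr with (hq | p | @⟨p, q, σ, m, h⟩ | ⟨p, s, q, hx, hy⟩)
  · rw [List.map_singleton, List.prod_singleton] at hw
    obtain ⟨l, hl, hprod⟩ := hw
    exact mem_lang_iff.mpr ⟨_, hq, l, hl, hprod⟩
  · rw [List.map_nil, List.prod_nil, Language.mem_one] at hw
    exact ⟨[], hw ▸ .nil p, rfl⟩
  · refine ⟨[m], ?_, by simp⟩
    have hσ : w = σ.toList ++ [] := by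
      cases σ with
      | none => simpa [Language.mem_one] using hw
      | some t =>
        rw [Option.toList_some, List.map_singleton, List.map_singleton, List.prod_singleton] at hw
        exact hw
    rw [hσ]
    exact .cons h (.nil q)
  · rw [List.map_cons, List.map_singleton, List.prod_cons, List.prod_singleton] at hw
    obtain ⟨w₁, ⟨l₁, h₁, hprod₁⟩, w₂, ⟨l₂, h₂, hprod₂⟩, rfl⟩ := Language.mem_mul.mp hw
    exact ⟨l₁ ++ l₂, h₁.append h₂, by simp [hprod₁, hprod₂]⟩

lemma mem_lang_of_mem_language_tripleGrammar {w : List α}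
    (hw : w ∈ (M.tripleGrammar hK).language) : w ∈ M.lang := by
  rw [ContextFreeGrammar.mem_language_iff_leftGen] at hw
  have hmem := hw.mem_prod (I := M.tripleLang) (fun t => rfl)
    fun r hr => (mem_rules_tripleGrammar.mp hr).prod_le
  change w ∈ ([.nonterminal none].map M.tripleLang).prod at hmem
  rwa [List.map_singleton, List.prod_singleton] at hmem

/-- If the paths of `M` can be triangulated with diagonals in `K`, then the triple grammar generates
all the words read by paths whose product is in `K`. -/
lemma Path.derives_tripleGrammar
    (hsplit : ∀ l : List G, (∀ m ∈ l, ∃ t ∈ M.δ, t.2.2.2 = m) → 2 ≤ l.length → l.prod ∈ K →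
      ∃ l₁ l₂, l₁ ≠ [] ∧ l₂ ≠ [] ∧ l = l₁ ++ l₂ ∧ l₁.prod ∈ K ∧ l₂.prod ∈ K)
    {p q : M.Q} {l : List G} {w : List α} (h : M.Path p l w q) (hl : l.prod ∈ K) :
    (M.tripleGrammar hK).Derives [.nonterminal (some (p, l.prod, q))] (w.map .terminal) := by
  induction hn : l.length using Nat.strong_induction_on generalizing p q l w with
  | _ n ih =>
  subst hn
  have hrule {r : ContextFreeRule α (Option (M.Q × G × M.Q))} (hr : M.TripleRule K r) :
      (M.tripleGrammar hK).Produces [.nonterminal r.input] r.output :=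
    ⟨r, mem_rules_tripleGrammar.mpr hr, ContextFreeRule.Rewrites.input_output⟩
  match l with
  | [] =>
    cases h
    exact (hrule (.empty p)).single
  | [m] =>
    cases h with
    | cons hδ hnil =>
      cases hnil
      rw [List.append_nil, List.prod_singleton]
      exact (hrule (.read hδ)).single
  | m :: m' :: l =>
    obtain ⟨l₁, l₂, hne₁, hne₂, heq, h₁, h₂⟩ :=
      hsplit _ (fun _ hm => h.exists_mem_of_mem hm) (by simp) hl
    rw [heq] at h ih ⊢
    obtain ⟨r, w₁, w₂, rfl, hp₁, hp₂⟩ := h.exists_of_append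
    have := List.length_pos_of_ne_nil hne₁
    have := List.length_pos_of_ne_nil hne₂
    rw [List.prod_append, List.map_append]
    exact (hrule (.comp p r q h₁ h₂)).trans_derives
      (.append (ih _ (by simp; omega) hp₁ h₁ rfl) (ih _ (by simp; omega) hp₂ h₂ rfl))

end GAutomaton

lemma GRecognizable.isContextFree {α : Type*} {X : Type} [Finite X] {L : Language α}
    (h : GRecognizable (FreeGroup X) L) : L.IsContextFree := by
  classical
  obtain ⟨M, rfl⟩ := h
  obtain ⟨c, hc⟩ : ∃ c, ∀ t ∈ M.δ, FreeGroup.norm t.2.2.2 ≤ c := by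
    obtain ⟨c, hc⟩ := (M.finδ.image fun t => FreeGroup.norm t.2.2.2).bddAbove
    exact ⟨c, fun t ht => hc ⟨t, ht, rfl⟩⟩
  refine ⟨M.tripleGrammar (FreeGroup.finite_norm_le (3 * c)), ?_⟩
  ext w
  refine ⟨GAutomaton.mem_lang_of_mem_language_tripleGrammar, fun hw => ?_⟩
  obtain ⟨q, hq, l, hl, hprod⟩ := GAutomaton.mem_lang_iff.mp hw
  rw [ContextFreeGrammar.mem_language_iff]
  have hder := hl.derives_tripleGrammar (hK := FreeGroup.finite_norm_le (3 * c))
    (fun l hl hlen hprod => FreeGroup.exists_split_of_norm_le hlen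
      (fun m hm => by obtain ⟨t, ht, rfl⟩ := hl m hm; exact hc t ht) hprod) (by simp [hprod])
  rw [hprod] at hder
  exact ContextFreeGrammar.Produces.trans_derives
    ⟨_, GAutomaton.mem_rules_tripleGrammar.mpr (.start hq), .input_output⟩ hder

/-! ### Simulating a stack in a free group -/

namespace FreeGroup

section Stack

variable {K : Type*}

/-- The positive word with the given letters. -/
def posWord {Y : Type*} (v : List Y) : List (Y × Bool) := v.map (·, true)

/-- Pop the stack symbol `k`, push the marker `none`, and then push the word `β`. -/
def popPush (k : K) (β : List K) : FreeGroup (Option K) :=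
  mk (posWord (β.map some ++ [none]) ++ [(some k, false)])

/-- Elements which encode no stack, and from which no sequence of left multiplications by
`(of none)⁻¹` and `popPush k β` leads to `1`. -/
def IsStuck (y : FreeGroup (Option K)) : Prop :=
  ∃ L, IsReduced L ∧ y = mk L ∧
    ((∃ v k u, L = posWord (v ++ [none]) ++ (some k, false) :: u) ∨
      ∃ x u, L = (x, false) :: u)

lemma isReduced_cons_neg {Y : Type*} {L : List (Y × Bool)} (hL : IsReduced L) (x : Y) :
    (∃ L', L = (x, true) :: L') ∨ IsReduced ((x, false) :: L) := by
  rcases L with - | ⟨⟨y, b⟩, L⟩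
  · exact .inr .singleton
  · by_cases h : x = y ∧ b = true
    · obtain ⟨rfl, rfl⟩ := h
      exact .inl ⟨L, rfl⟩
    · refine .inr (isReduced_cons_cons.mpr ⟨fun hxy => ?_, hL⟩)
      simpa [show x = y from hxy] using h

lemma isReduced_posWord_append {Y : Type*} (v : List Y) {x : Y} {L : List (Y × Bool)}
    (hL : IsReduced ((x, true) :: L)) : IsReduced (posWord v ++ (x, true) :: L) := by
  induction v with
  | nil => exact hL
  | cons y v ih =>
    cases v with
    | nil => exact isReduced_cons_cons.mpr ⟨fun _ => rfl, hL⟩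
    | cons y' v => exact isReduced_cons_cons.mpr ⟨fun _ => rfl, ih⟩

lemma isReduced_posWord {Y : Type*} (v : List Y) : IsReduced (posWord v) := by
  induction v using List.reverseRecOn with
  | nil => exact .nil
  | append_singleton v x =>
    simpa [posWord] using isReduced_posWord_append v (L := []) (x := x) .singleton

lemma eq_of_mk_eq_of_isReduced {Y : Type*} {L₁ L₂ : List (Y × Bool)} (h₁ : IsReduced L₁)
    (h₂ : IsReduced L₂) (h : mk L₁ = mk L₂) : L₁ = L₂ := by
  classical
  have := congrArg toWord h
  rwa [toWord_mk, toWord_mk, h₁.reduce_eq, h₂.reduce_eq] at this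

lemma inv_of_mul_mk_cons {Y : Type*} (x : Y) (L : List (Y × Bool)) :
    (of x)⁻¹ * mk ((x, true) :: L) = mk L := by
  rw [inv_mul_eq_iff_eq_mul, of, mul_mk, List.singleton_append]

lemma inv_of_mul_mk {Y : Type*} (x : Y) (L : List (Y × Bool)) :
    (of x)⁻¹ * mk L = mk ((x, false) :: L) := by
  simp [of, inv_mk, invRev]

lemma popPush_mul_mk_cons (k : K) (β : List K) (L : List (Option K × Bool)) :
    popPush k β * mk ((some k, true) :: L) = mk (posWord (β.map some ++ [none]) ++ L) := by
  rw [popPush, ← mul_mk, ← mul_mk, mul_assoc, ← inv_of_mul_mk_cons (some k) L]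
  rfl

lemma popPush_mul_mk (k : K) (β : List K) (L : List (Option K × Bool)) :
    popPush k β * mk L = mk (posWord (β.map some ++ [none]) ++ (some k, false) :: L) := by
  rw [popPush, mul_mk, List.append_assoc, List.singleton_append]

lemma not_isStuck_one : ¬ IsStuck (1 : FreeGroup (Option K)) := by
  rintro ⟨L, hL, h1, h⟩
  rw [one_eq_mk] at h1
  obtain rfl := eq_of_mk_eq_of_isReduced .nil hL h1
  simp at h

lemma isStuck_inv_of_mul {x : Option K} {L : List (Option K × Bool)}
    (hL : IsReduced ((x, false) :: L)) : IsStuck ((of x)⁻¹ * mk L) :=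
  ⟨_, hL, inv_of_mul_mk x L, .inr ⟨x, L, rfl⟩⟩

lemma isStuck_popPush_mul {k : K} (β : List K) {L : List (Option K × Bool)}
    (hL : IsReduced ((some k, false) :: L)) : IsStuck (popPush k β * mk L) := by
  refine ⟨_, ?_, popPush_mul_mk k β L, .inl ⟨_, k, L, rfl⟩⟩
  have h := isReduced_posWord_append (β.map some) (x := none)
    (isReduced_cons_cons.mpr ⟨fun h => by simp at h, hL⟩)
  simpa [posWord] using h

lemma IsStuck.inv_of_none_mul {y : FreeGroup (Option K)} (hy : IsStuck y) :
    IsStuck ((of none)⁻¹ * y) := by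
  obtain ⟨L, hL, rfl, h⟩ := hy
  rcases isReduced_cons_neg hL none with ⟨L', rfl⟩ | hL'
  · refine ⟨L', hL.infix ⟨[(none, true)], [], by simp⟩, inv_of_mul_mk_cons _ _, ?_⟩
    rcases h with ⟨v, k, u, h⟩ | ⟨x, u, h⟩
    · cases v with
      | nil => exact .inr ⟨some k, u, by simpa [posWord] using h⟩
      | cons a v => exact .inl ⟨v, k, u, (List.cons.inj h).2⟩
    · simp at h
  · exact isStuck_inv_of_mul hL'

lemma IsStuck.popPush_mul {y : FreeGroup (Option K)} (hy : IsStuck y) (k : K) (β : List K) :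
    IsStuck (popPush k β * y) := by
  obtain ⟨L, hL, rfl, h⟩ := hy
  rcases isReduced_cons_neg hL (some k) with ⟨L', rfl⟩ | hL'
  · rcases h with ⟨v, k', u, h⟩ | ⟨x, u, h⟩
    · cases v with
      | nil => simp [posWord] at h
      | cons a v =>
        obtain rfl := (List.cons.inj h).2
        rw [popPush_mul_mk_cons]
        refine ⟨_, ?_, rfl, .inl ⟨β.map some ++ none :: v, k', u, by simp [posWord]⟩⟩
        have hred : IsReduced ((none, true) :: (some k', false) :: u) :=
          hL.infix ⟨(some k, true) :: posWord v, [], by simp [posWord]⟩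
        simpa [posWord] using isReduced_posWord_append (β.map some ++ none :: v) hred
    · simp at h
  · exact isStuck_popPush_mul β hL'

lemma eq_cons_or_isStuck_inv_of_mul (x : Option K) (v : List (Option K)) :
    (∃ v', v = x :: v') ∨ IsStuck ((of x)⁻¹ * mk (posWord v)) := by
  rcases isReduced_cons_neg (isReduced_posWord v) x with ⟨L', h⟩ | h
  · cases v with
    | nil => simp [posWord] at h
    | cons a v => exact .inl ⟨v, by simpa [posWord] using (List.cons.inj h).1⟩
  · exact .inr (isStuck_inv_of_mul h)

lemma eq_cons_or_isStuck_popPush_mul (k : K) (β : List K) (v : List (Option K)) :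
    (∃ v', v = some k :: v') ∨ IsStuck (popPush k β * mk (posWord v)) := by
  rcases isReduced_cons_neg (isReduced_posWord v) (some k) with ⟨L', h⟩ | h
  · cases v with
    | nil => simp [posWord] at h
    | cons a v => exact .inl ⟨v, by simpa [posWord] using (List.cons.inj h).1⟩
  · exact .inr (isStuck_popPush_mul β h)

end Stack

end FreeGroup

/-! ### Context-free languages are recognized by automata over free groups -/

namespace ContextFreeGrammar

open FreeGroup

variable {α : Type*} {K : Type*} (g : ContextFreeGrammar α) (code : Symbol α g.NT → K)

/-- The transitions of the automaton performing leftmost derivations of `g`. If `y` encodes the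
current sentential form, then the register holds `y⁻¹`. -/
inductive StackTransition : Bool × Option α × Bool × FreeGroup (Option K) → Prop
  | start : StackTransition (false, none, true, (of (some (code (.nonterminal g.initial))))⁻¹)
  | drop : StackTransition (true, none, true, of none)
  | read (t : α) : StackTransition (true, some t, true, (popPush (code (.terminal t)) [])⁻¹)
  | rule {r : ContextFreeRule α g.NT} (hr : r ∈ g.rules) : StackTransition
      (true, none, true, (popPush (code (.nonterminal r.input)) (r.output.map code))⁻¹)

lemma finite_stackTransition [Finite α] : {t | g.StackTransition code t}.Finite := by
  refine ((Set.toFinite {((false, none, true, (of (some (code (.nonterminal g.initial))))⁻¹) :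
      Bool × Option α × Bool × FreeGroup (Option K)), (true, none, true, of none)}).union
    ((Set.finite_range fun t : α => ((true, some t, true, (popPush (code (.terminal t)) [])⁻¹) :
      Bool × Option α × Bool × FreeGroup (Option K))).union
    (Set.finite_range fun r : g.rules => ((true, none, true,
      (popPush (code (.nonterminal r.1.input)) (r.1.output.map code))⁻¹) :
      Bool × Option α × Bool × FreeGroup (Option K))))).subset ?_
  rintro t (- | - | t | hr)
  · exact .inl (.inl rfl)
  · exact .inl (.inr rfl)
  · exact .inr (.inl ⟨t, rfl⟩)
  · exact .inr (.inr ⟨⟨_, hr⟩, rfl⟩)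

/-- The automaton over a free group performing leftmost derivations of `g`. -/
def stackAutomaton [Finite α] : GAutomaton α (FreeGroup (Option K)) where
  Q := Bool
  finQ := inferInstance
  q0 := false
  acc := {true}
  δ := {t | g.StackTransition code t}
  finδ := g.finite_stackTransition code

variable {g code}

/-- The encoding of a stack of symbols and markers `none`. -/
def stackElt (code : Symbol α g.NT → K) (p : List (Option (Symbol α g.NT))) :
    FreeGroup (Option K) :=
  FreeGroup.mk (posWord (p.map (Option.map code)))

lemma popPush_mul_stackElt (s : Symbol α g.NT) (β : List (Symbol α g.NT))
    (p : List (Option (Symbol α g.NT))) :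
    popPush (code s) (β.map code) * stackElt code (some s :: p) =
      stackElt code (β.map some ++ none :: p) := by
  refine (popPush_mul_mk_cons (code s) (β.map code) _).trans ?_
  simp [stackElt, posWord, Function.comp_def]

lemma inv_of_none_mul_stackElt (p : List (Option (Symbol α g.NT))) :
    (of none)⁻¹ * stackElt code (none :: p) = stackElt code p :=
  inv_of_mul_mk_cons none _

lemma exists_eq_cons_of_not_isStuck {s : Symbol α g.NT} (hs : ∀ s', code s' = code s → s' = s)
    {p : List (Option (Symbol α g.NT))} {β : List K}
    (h : ¬ IsStuck (popPush (code s) β * stackElt code p)) : ∃ p', p = some s :: p' := by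
  rcases eq_cons_or_isStuck_popPush_mul (code s) β (p.map (Option.map code)) with ⟨v, hv⟩ | h'
  · rcases p with - | ⟨- | s', p⟩
    · simp at hv
    · simp at hv
    · obtain rfl := hs s' (by simpa using (List.cons.inj hv).1)
      exact ⟨p, rfl⟩
  · exact absurd h' h

variable [Finite α]

lemma exists_path_of_leftGen {u : List (Symbol α g.NT)} {w : List α} (h : g.LeftGen u w)
    {p : List (Option (Symbol α g.NT))} (hp : p.reduceOption = u) :
    ∃ l, (g.stackAutomaton code).Path true l w true ∧ l.prod = stackElt code p := by
  have hdrop {p : List (Option (Symbol α g.NT))} {w : List α}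
      (h : ∃ l, (g.stackAutomaton code).Path true l w true ∧ l.prod = stackElt code p) :
      ∃ l, (g.stackAutomaton code).Path true l w true ∧ l.prod = stackElt code (none :: p) := by
    obtain ⟨l, hl, hprod⟩ := h
    refine ⟨_, .cons (M := g.stackAutomaton code) StackTransition.drop hl, ?_⟩
    rw [List.prod_cons, hprod, ← inv_of_none_mul_stackElt, mul_inv_cancel_left]
  induction h generalizing p with
  | nil =>
    induction p with
    | nil => exact ⟨[], .nil (M := g.stackAutomaton code) true, rfl⟩
    | cons a p ih =>
      cases a with
      | none => exact hdrop (ih hp)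
      | some s => simp at hp
  | @terminal t u w h ih =>
    induction p with
    | nil => simp at hp
    | cons a p ihp =>
      cases a with
      | none => exact hdrop (ihp hp)
      | some s =>
        obtain ⟨rfl, rfl⟩ : s = .terminal t ∧ p.reduceOption = u := by simpa using hp
        obtain ⟨l, hl, hprod⟩ := ih (p := none :: p) rfl
        refine ⟨_, .cons (M := g.stackAutomaton code) (StackTransition.read t) hl, ?_⟩
        rw [List.prod_cons, hprod, inv_mul_eq_iff_eq_mul]
        exact (popPush_mul_stackElt (.terminal t) [] p).symm
  | @rule r hr u w h ih =>
    induction p with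
    | nil => simp at hp
    | cons a p ihp =>
      cases a with
      | none => exact hdrop (ihp hp)
      | some s =>
        obtain ⟨rfl, rfl⟩ : s = .nonterminal r.input ∧ p.reduceOption = u := by simpa using hp
        obtain ⟨l, hl, hprod⟩ := ih (p := r.output.map some ++ none :: p)
          (by simp [List.reduceOption])
        refine ⟨_, .cons (M := g.stackAutomaton code) (StackTransition.rule hr) hl, ?_⟩
        rw [List.prod_cons, hprod, inv_mul_eq_iff_eq_mul]
        exact (popPush_mul_stackElt (.nonterminal r.input) r.output p).symm

lemma not_isStuck_and_leftGen_of_path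
    (hterm : ∀ t s, code s = code (.terminal t) → s = .terminal t)
    (hrule : ∀ r ∈ g.rules, ∀ s, code s = code (.nonterminal r.input) → s = .nonterminal r.input)
    {a b : (g.stackAutomaton code).Q} {l : List (FreeGroup (Option K))} {w : List α}
    (h : (g.stackAutomaton code).Path a l w b) (ha : a = (true : Bool)) :
    ¬ IsStuck l.prod ∧ ∀ p, l.prod = stackElt code p → g.LeftGen p.reduceOption w := by
  induction h with
  | nil p =>
    refine ⟨not_isStuck_one, fun p hp => ?_⟩
    have hnil := eq_of_mk_eq_of_isReduced .nil (isReduced_posWord _) hp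
    cases p with
    | nil => exact .nil
    | cons a p => simp [posWord] at hnil
  | @cons a c b σ m l w h hp ih =>
    subst ha
    rw [List.prod_cons]
    generalize hy : m * l.prod = y
    rw [← eq_inv_mul_iff_mul_eq] at hy
    rw [hy] at ih
    obtain - | - | t | @⟨r, hr⟩ := h
    · obtain ⟨hstuck, hgen⟩ := ih rfl
      refine ⟨fun h => hstuck h.inv_of_none_mul, ?_⟩
      rintro p rfl
      rcases eq_cons_or_isStuck_inv_of_mul none (p.map (Option.map code)) with ⟨v, hv⟩ | h
      · rcases p with - | ⟨- | s, p⟩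
        · simp at hv
        · exact hgen p (inv_of_none_mul_stackElt p)
        · simp at hv
      · exact absurd h hstuck
    · rw [inv_inv] at ih
      obtain ⟨hstuck, hgen⟩ := ih rfl
      refine ⟨fun h => hstuck (h.popPush_mul _ _), ?_⟩
      rintro p rfl
      obtain ⟨p, rfl⟩ := exists_eq_cons_of_not_isStuck (hterm t) hstuck
      exact .terminal t (hgen (none :: p) (popPush_mul_stackElt (.terminal t) [] p))
    · rw [inv_inv] at ih
      obtain ⟨hstuck, hgen⟩ := ih rfl
      refine ⟨fun h => hstuck (h.popPush_mul _ _), ?_⟩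
      rintro p rfl
      obtain ⟨p, rfl⟩ := exists_eq_cons_of_not_isStuck (hrule r hr) hstuck
      refine .rule hr ?_
      have := hgen _ (popPush_mul_stackElt (.nonterminal r.input) r.output p)
      simpa [List.reduceOption] using this

lemma lang_stackAutomaton
    (hterm : ∀ t s, code s = code (.terminal t) → s = .terminal t)
    (hrule : ∀ r ∈ g.rules, ∀ s, code s = code (.nonterminal r.input) → s = .nonterminal r.input) :
    (g.stackAutomaton code).lang = g.language := by
  ext w
  rw [GAutomaton.mem_lang_iff, mem_language_iff_leftGen]
  have hinit : of (some (code (.nonterminal g.initial))) =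
    stackElt code [some (.nonterminal g.initial)] := rfl
  constructor
  · rintro ⟨q, rfl, l, hl, hprod⟩
    generalize hq : (g.stackAutomaton code).q0 = q at hl
    cases hl with
    | nil => exact absurd hq Bool.false_ne_true
    | cons h hp =>
      cases hq
      cases h
      rw [List.prod_cons, inv_mul_eq_one, eq_comm] at hprod
      exact (not_isStuck_and_leftGen_of_path hterm hrule hp rfl).2 [some (.nonterminal g.initial)]
        hprod
  · intro h
    obtain ⟨l, hl, hprod⟩ := exists_path_of_leftGen (code := code) h
      (p := [some (.nonterminal g.initial)]) rfl
    refine ⟨true, rfl, _, .cons (M := g.stackAutomaton code) StackTransition.start hl, ?_⟩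
    rw [List.prod_cons, hprod, inv_mul_eq_one, hinit]

end ContextFreeGrammar

/-! ### Embedding free groups of countable rank into the free group of rank two -/

namespace FreeGroup

/-- The homomorphism from the free group on `ℤ` sending the generator `n` to `bⁿ a b⁻ⁿ`. -/
def conjHom : FreeGroup ℤ →* FreeGroup (Fin 2) :=
  lift fun n => of 1 ^ n * of 0 * (of 1 ^ n)⁻¹

/-- The action of the infinite cyclic group on the free group on `ℤ` by translation. -/
def shiftHom : Multiplicative ℤ →* MulAut (FreeGroup ℤ) :=
  zpowersHom _ (freeGroupCongr (Equiv.addRight 1))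

lemma shiftHom_apply_of (n k : ℤ) :
    shiftHom (Multiplicative.ofAdd n) (of k) = of (k + n) := by
  have h1 (k : ℤ) : (freeGroupCongr (Equiv.addRight (1 : ℤ)) : MulAut (FreeGroup ℤ)) (of k) =
    of (k + 1) := rfl
  have h2 (k : ℤ) : ((freeGroupCongr (Equiv.addRight (1 : ℤ)))⁻¹ : MulAut (FreeGroup ℤ)) (of k) =
    of (k - 1) := rfl
  rw [shiftHom, zpowersHom_apply, toAdd_ofAdd]
  induction n generalizing k with
  | zero => simp
  | succ n ih => rw [zpow_add_one, MulAut.mul_apply, h1, ih, add_assoc, add_comm 1]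
  | pred n ih =>
    rw [zpow_sub_one, MulAut.mul_apply, h2, ih]
    congr 1
    ring

/-- Composed with `conjHom`, the homomorphism `F₂ → F_ℤ ⋊ ℤ` sending the generators to the
generator `0` and to the translation is the inclusion of `F_ℤ`. -/
lemma conjHom_injective : Function.Injective conjHom := by
  let ψ : FreeGroup (Fin 2) →* FreeGroup ℤ ⋊[shiftHom] Multiplicative ℤ :=
    lift ![SemidirectProduct.inl (of 0), SemidirectProduct.inr (Multiplicative.ofAdd 1)]
  have hψ : ψ.comp conjHom = SemidirectProduct.inl := by
    ext1 n
    have h : (SemidirectProduct.inr (Multiplicative.ofAdd 1) :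
        FreeGroup ℤ ⋊[shiftHom] Multiplicative ℤ) ^ n =
        SemidirectProduct.inr (Multiplicative.ofAdd n) := by
      rw [← _root_.map_zpow, ← ofAdd_zsmul, smul_eq_mul, mul_one]
    simp only [MonoidHom.comp_apply, conjHom, lift_apply_of, _root_.map_mul, _root_.map_inv,
      _root_.map_zpow, ψ,
      Matrix.cons_val_zero, Matrix.cons_val_one, h]
    rw [← _root_.map_inv, ← SemidirectProduct.inl_aut, shiftHom_apply_of, zero_add]
  refine Function.Injective.of_comp (f := ψ) ?_
  rw [← MonoidHom.coe_comp, hψ]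
  exact SemidirectProduct.inl_injective

lemma exists_injective_hom_of_countable (X : Type*) [Countable X] :
    ∃ φ : FreeGroup X →* FreeGroup (Fin 2), Function.Injective φ := by
  obtain ⟨f, hf⟩ := Countable.exists_injective_nat X
  exact ⟨conjHom.comp (map fun x => (f x : ℤ)),
    conjHom_injective.comp (map_injective (Nat.cast_injective.comp hf))⟩

end FreeGroup

lemma Language.IsContextFree.gRecognizable {α : Type} [Finite α] {L : Language α}
    (h : L.IsContextFree) : GRecognizable (FreeGroup (Fin 2)) L := by
  classical
  obtain ⟨g, rfl⟩ := h
  let S : Set (Symbol α g.NT) := Set.range Symbol.terminal ∪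
    (fun r : ContextFreeRule α g.NT => .nonterminal r.input) '' (g.rules : Set _)
  have hS : S.Finite := (Set.finite_range _).union (g.rules.finite_toSet.image _)
  have := hS.to_subtype
  let code (s : Symbol α g.NT) : Option S := if h : s ∈ S then some ⟨s, h⟩ else none
  have hcode {s s' : Symbol α g.NT} (hs : s ∈ S) (h : code s' = code s) : s' = s := by
    have hs' : s' ∈ S := by
      by_contra hs'
      simp [code, hs, hs'] at h
    simpa [code, hs, hs'] using h
  obtain ⟨φ, hφ⟩ := FreeGroup.exists_injective_hom_of_countable (Option (Option S))
  refine GRecognizable.map (G := FreeGroup (Option (Option S)))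
    ⟨g.stackAutomaton code, g.lang_stackAutomaton ?_ ?_⟩ φ hφ
  · exact fun t s => hcode (.inl ⟨t, rfl⟩)
  · exact fun r hr s => hcode (.inr ⟨r, hr, rfl⟩)


/-! ### A free subgroup of finite index in `GL(2, ℤ)` -/

namespace Matrix.SpecialLinearGroup

open scoped Pointwise

/-- The vectors of `ℤ²` other than zero. -/
abbrev NonzeroVec : Type := {v : Fin 2 → ℤ // v ≠ 0}

instance : MulAction (SpecialLinearGroup (Fin 2) ℤ) NonzeroVec where
  smul A v := ⟨A.1 *ᵥ v.1, fun h => v.2 <| by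
    have h' : A⁻¹.1 *ᵥ A.1 *ᵥ v.1 = v.1 := by
      rw [mulVec_mulVec, ← coe_mul, inv_mul_cancel, coe_one, one_mulVec]
    rw [← h', h, mulVec_zero]⟩
  one_smul v := Subtype.ext (one_mulVec v.1)
  mul_smul A B v := Subtype.ext (mulVec_mulVec v.1 A.1 B.1).symm

lemma smul_nonzeroVec_apply (A : SpecialLinearGroup (Fin 2) ℤ) (v : NonzeroVec) (i : Fin 2) :
    (A • v).1 i = A.1 i 0 * v.1 0 + A.1 i 1 * v.1 1 := by
  change (A.1 *ᵥ v.1) i = _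
  simp [mulVec, dotProduct]

/-- The upper unitriangular matrix with off-diagonal entry `2` and its transpose. -/
def sanovGen : Fin 2 → SpecialLinearGroup (Fin 2) ℤ :=
  ![⟨!![1, 2; 0, 1], by simp⟩, ⟨!![1, 0; 2, 1], by simp⟩]

lemma coe_sanovGen_zero : (sanovGen 0).1 = !![1, 2; 0, 1] := rfl

lemma coe_sanovGen_one : (sanovGen 1).1 = !![1, 0; 2, 1] := rfl

lemma coe_inv_sanovGen_zero : (sanovGen 0)⁻¹.1 = !![1, -2; 0, 1] := by
  rw [coe_inv, coe_sanovGen_zero, adjugate_fin_two_of, neg_zero]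

lemma coe_inv_sanovGen_one : (sanovGen 1)⁻¹.1 = !![1, 0; -2, 1] := by
  rw [coe_inv, coe_sanovGen_one, adjugate_fin_two_of, neg_zero]

/-- The homomorphism from the free group of rank two onto Sanov's subgroup of `SL(2, ℤ)`. -/
def sanovHom : FreeGroup (Fin 2) →* SpecialLinearGroup (Fin 2) ℤ :=
  FreeGroup.lift sanovGen

/-- The attracting sets of the generators. -/
def attracting : Fin 2 → Set NonzeroVec :=
  ![{v | 0 ≤ v.1 0 * v.1 1 ∧ (v.1 1).natAbs < (v.1 0).natAbs},
    {v | 0 < v.1 0 * v.1 1 ∧ (v.1 0).natAbs ≤ (v.1 1).natAbs}]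

/-- The attracting sets of the inverses of the generators. -/
def repelling : Fin 2 → Set NonzeroVec :=
  ![{v | v.1 0 * v.1 1 < 0 ∧ (v.1 1).natAbs ≤ (v.1 0).natAbs},
    {v | v.1 0 * v.1 1 ≤ 0 ∧ (v.1 0).natAbs < (v.1 1).natAbs}]

lemma disjoint_attracting_repelling (i j : Fin 2) : Disjoint (attracting i) (repelling j) := by
  refine Set.disjoint_left.2 fun v => ?_
  revert i j
  simp only [Fin.forall_fin_two, attracting, repelling, cons_val_zero, cons_val_one,
    Set.mem_ofPred_eq]
  grind

lemma pairwise_disjoint_attracting : Pairwise (Function.onFun Disjoint attracting) := by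
  refine fun i j hij => Set.disjoint_left.2 fun v => ?_
  revert i j
  simp only [Fin.forall_fin_two, attracting, cons_val_zero, cons_val_one, Set.mem_ofPred_eq]
  grind

lemma pairwise_disjoint_repelling : Pairwise (Function.onFun Disjoint repelling) := by
  refine fun i j hij => Set.disjoint_left.2 fun v => ?_
  revert i j
  simp only [Fin.forall_fin_two, repelling, cons_val_zero, cons_val_one, Set.mem_ofPred_eq]
  grind

lemma NonzeroVec.ne_zero_or_ne_zero (v : NonzeroVec) : v.1 0 ≠ 0 ∨ v.1 1 ≠ 0 := by
  by_contra! h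
  exact v.2 (funext (Fin.forall_fin_two.2 h))

lemma sanovHom_injective : Function.Injective sanovHom := by
  refine FreeGroup.injective_lift_of_ping_pong sanovGen attracting repelling ?_
    pairwise_disjoint_attracting pairwise_disjoint_repelling disjoint_attracting_repelling
    (fun i => Set.smul_set_subset_iff.2 fun v hv => ?_)
    (fun i => Set.smul_set_subset_iff.2 fun v hv => ?_)
  · refine Fin.forall_fin_two.2 ⟨⟨⟨![1, 0], by simp⟩, ?_⟩, ⟨⟨![1, 1], by simp⟩, ?_⟩⟩ <;>
      simp [attracting]
  · have hne := v.ne_zero_or_ne_zero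
    revert i
    simp [Fin.forall_fin_two, attracting, repelling, smul_nonzeroVec_apply, coe_sanovGen_zero,
      coe_sanovGen_one, mul_nonneg_iff, mul_pos_iff, mul_neg_iff, mul_nonpos_iff, -not_and]
    omega
  · have hne := v.ne_zero_or_ne_zero
    revert i
    simp [Fin.forall_fin_two, attracting, repelling, smul_nonzeroVec_apply, coe_inv_sanovGen_zero,
      coe_inv_sanovGen_one, mul_nonneg_iff, mul_pos_iff, mul_neg_iff, mul_nonpos_iff, -not_and,
      -coe_inv]
    omega

/-- The invertible matrices that reduce modulo `2` to the identity. -/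
abbrev congruenceKernel : Subgroup (GL (Fin 2) ℤ) :=
  (GeneralLinearGroup.map (n := Fin 2) (Int.castRingHom (ZMod 2))).ker

lemma toGL_sanovHom_mem_congruenceKernel (f : FreeGroup (Fin 2)) :
    toGL (sanovHom f) ∈ congruenceKernel := by
  rw [MonoidHom.mem_ker]
  suffices h : ((GeneralLinearGroup.map (Int.castRingHom (ZMod 2))).comp toGL).comp sanovHom = 1 from
    DFunLike.congr_fun h f
  ext1 i
  fin_cases i <;> ext i j <;> fin_cases i <;> fin_cases j <;> simp [sanovHom, sanovGen] <;> rfl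

lemma odd_and_even_of_mem_congruenceKernel {M : GL (Fin 2) ℤ} (hM : M ∈ congruenceKernel) :
    Odd (M.1 0 0) ∧ Even (M.1 0 1) ∧ Even (M.1 1 0) ∧ Odd (M.1 1 1) := by
  rw [MonoidHom.mem_ker] at hM
  have h (i j : Fin 2) : ((M.1 i j : ℤ) : ZMod 2) = (1 : Matrix (Fin 2) (Fin 2) (ZMod 2)) i j :=
    congrArg (fun N : GL (Fin 2) (ZMod 2) => N.1 i j) hM
  simp only [← ZMod.intCast_eq_one_iff_odd, ← ZMod.intCast_eq_zero_iff_even, h]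
  simp

lemma natAbs_det_eq_one (M : GL (Fin 2) ℤ) :
    (M.1 0 0 * M.1 1 1 - M.1 0 1 * M.1 1 0).natAbs = 1 := by
  rw [← det_fin_two]
  exact Int.isUnit_iff_natAbs_eq.1 ((isUnit_iff_isUnit_det _).1 M.isUnit)

/-- The products of an element of Sanov's subgroup and a matrix with small entries. -/
def IsSanovMulSmall (M : GL (Fin 2) ℤ) : Prop :=
  ∃ f, ∃ N : GL (Fin 2) ℤ, (∀ i j, (N.1 i j).natAbs ≤ 1) ∧ M = toGL (sanovHom f) * N

lemma IsSanovMulSmall.of_mul {M : GL (Fin 2) ℤ} (f : FreeGroup (Fin 2))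
    (h : IsSanovMulSmall (toGL (sanovHom f) * M)) : IsSanovMulSmall M := by
  obtain ⟨f', N, hN, h⟩ := h
  refine ⟨f⁻¹ * f', N, hN, ?_⟩
  rw [map_mul, map_mul, mul_assoc, ← h, map_inv, map_inv, inv_mul_cancel_left]

lemma sanovHom_of_zero_mul (M : GL (Fin 2) ℤ) : (toGL (sanovHom (.of 0)) * M).1 =
    !![M.1 0 0 + 2 * M.1 1 0, M.1 0 1 + 2 * M.1 1 1; M.1 1 0, M.1 1 1] := by
  change (sanovHom (.of 0)).1 * M.1 = _
  rw [sanovHom, FreeGroup.lift_apply_of, coe_sanovGen_zero, eta_fin_two M.1]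
  simp

lemma sanovHom_inv_of_zero_mul (M : GL (Fin 2) ℤ) : (toGL (sanovHom (.of 0)⁻¹) * M).1 =
    !![M.1 0 0 - 2 * M.1 1 0, M.1 0 1 - 2 * M.1 1 1; M.1 1 0, M.1 1 1] := by
  change (sanovHom (.of 0)⁻¹).1 * M.1 = _
  rw [map_inv, sanovHom, FreeGroup.lift_apply_of, coe_inv_sanovGen_zero, eta_fin_two M.1]
  simp [sub_eq_add_neg]

lemma sanovHom_of_one_mul (M : GL (Fin 2) ℤ) : (toGL (sanovHom (.of 1)) * M).1 =
    !![M.1 0 0, M.1 0 1; 2 * M.1 0 0 + M.1 1 0, 2 * M.1 0 1 + M.1 1 1] := by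
  change (sanovHom (.of 1)).1 * M.1 = _
  rw [sanovHom, FreeGroup.lift_apply_of, coe_sanovGen_one, eta_fin_two M.1]
  simp

lemma sanovHom_inv_of_one_mul (M : GL (Fin 2) ℤ) : (toGL (sanovHom (.of 1)⁻¹) * M).1 =
    !![M.1 0 0, M.1 0 1; -(2 * M.1 0 0) + M.1 1 0, -(2 * M.1 0 1) + M.1 1 1] := by
  change (sanovHom (.of 1)⁻¹).1 * M.1 = _
  rw [map_inv, sanovHom, FreeGroup.lift_apply_of, coe_inv_sanovGen_one, eta_fin_two M.1]
  simp

lemma isSanovMulSmall_of_lower_left_eq_zero {M : GL (Fin 2) ℤ} (hM : M ∈ congruenceKernel)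
    (h : M.1 1 0 = 0) : IsSanovMulSmall M := by
  induction hn : (M.1 0 1).natAbs using Nat.strong_induction_on generalizing M with
  | _ n ih =>
    have hdet := natAbs_det_eq_one M
    rw [h, mul_zero, sub_zero, Int.natAbs_mul, mul_eq_one] at hdet
    obtain ⟨-, ⟨b, hb⟩, -, -⟩ := odd_and_even_of_mem_congruenceKernel hM
    have step (f : FreeGroup (Fin 2)) (hf : (toGL (sanovHom f) * M).1 1 0 = 0)
        (hlt : ((toGL (sanovHom f) * M).1 0 1).natAbs < n) : IsSanovMulSmall M :=
      .of_mul f (ih _ hlt (mul_mem (toGL_sanovHom_mem_congruenceKernel f) hM) hf rfl)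
    obtain h0 | h0 | h0 : M.1 0 1 = 0 ∨ (M.1 0 1 + 2 * M.1 1 1).natAbs < n ∨
        (M.1 0 1 - 2 * M.1 1 1).natAbs < n := by omega
    · refine ⟨1, M, ?_, by simp⟩
      simp [Fin.forall_fin_two, h0, h, hdet]
    · apply step (.of 0) <;> rw [sanovHom_of_zero_mul] <;> assumption
    · apply step (.of 0)⁻¹ <;> rw [sanovHom_inv_of_zero_mul] <;> assumption

lemma isSanovMulSmall_of_mem_congruenceKernel {M : GL (Fin 2) ℤ} (hM : M ∈ congruenceKernel) :
    IsSanovMulSmall M := by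
  induction hn : (M.1 0 0).natAbs + (M.1 1 0).natAbs using Nat.strong_induction_on
    generalizing M with
  | _ n ih =>
    obtain ⟨⟨a, ha⟩, -, ⟨c, hc⟩, -⟩ := odd_and_even_of_mem_congruenceKernel hM
    have step (f : FreeGroup (Fin 2)) (hlt : ((toGL (sanovHom f) * M).1 0 0).natAbs +
        ((toGL (sanovHom f) * M).1 1 0).natAbs < n) : IsSanovMulSmall M :=
      .of_mul f (ih _ hlt (mul_mem (toGL_sanovHom_mem_congruenceKernel f) hM) rfl)
    obtain h0 | h0 | h0 | h0 | h0 : M.1 1 0 = 0 ∨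
        (M.1 0 0 + 2 * M.1 1 0).natAbs + (M.1 1 0).natAbs < n ∨
        (M.1 0 0 - 2 * M.1 1 0).natAbs + (M.1 1 0).natAbs < n ∨
        (M.1 0 0).natAbs + (2 * M.1 0 0 + M.1 1 0).natAbs < n ∨
        (M.1 0 0).natAbs + (-(2 * M.1 0 0) + M.1 1 0).natAbs < n := by omega
    · exact isSanovMulSmall_of_lower_left_eq_zero hM h0
    · exact step (.of 0) (by rwa [sanovHom_of_zero_mul])
    · exact step (.of 0)⁻¹ (by rwa [sanovHom_inv_of_zero_mul])
    · exact step (.of 1) (by rwa [sanovHom_of_one_mul])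
    · exact step (.of 1)⁻¹ (by rwa [sanovHom_inv_of_one_mul])

lemma finite_natAbs_le_one : {N : GL (Fin 2) ℤ | ∀ i j, (N.1 i j).natAbs ≤ 1}.Finite := by
  refine Set.Finite.of_injOn (f := fun N : GL (Fin 2) ℤ => (N.1 : Fin 2 → Fin 2 → ℤ))
    (t := Set.pi Set.univ fun _ => Set.pi Set.univ fun _ => Set.Icc (-1) 1) ?_
    (fun _ _ _ _ h => Units.ext h)
    (Set.Finite.pi fun _ => Set.Finite.pi fun _ => Set.finite_Icc _ _)
  intro N hN i _ j _
  have hle : (N.1 i j).natAbs ≤ 1 := hN i j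
  change N.1 i j ∈ Set.Icc (-1 : ℤ) 1
  exact Set.mem_Icc.2 (by omega)

/-- Sanov's subgroup has finite index in `GL(2, ℤ)`. -/
lemma exists_finite_forall_exists_sanovHom_mul : ∃ R : Set (GL (Fin 2) ℤ), R.Finite ∧
    ∀ M, ∃ f, ∃ N ∈ R, M = toGL.comp sanovHom f * N := by
  let red := GeneralLinearGroup.map (n := Fin 2) (Int.castRingHom (ZMod 2))
  refine ⟨_, finite_natAbs_le_one.mul (Set.finite_range (Set.rangeSplitting red)), fun M => ?_⟩
  let C := Set.rangeSplitting red ⟨red M, M, rfl⟩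
  have hker : M * C⁻¹ ∈ congruenceKernel := by
    rw [MonoidHom.mem_ker, map_mul, map_inv, mul_inv_eq_one]
    exact (Set.apply_rangeSplitting red ⟨red M, M, rfl⟩).symm
  obtain ⟨f, N, hN, h⟩ := isSanovMulSmall_of_mem_congruenceKernel hker
  refine ⟨f, N * C, Set.mul_mem_mul hN ⟨_, rfl⟩, ?_⟩
  rw [MonoidHom.comp_apply, ← mul_assoc, ← h, inv_mul_cancel_right]

end Matrix.SpecialLinearGroup

/-- `CF = 𝔏(F₂) = 𝔏(SL(2,ℤ)) = 𝔏(GL(2,ℤ))`. -/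
theorem cf_eq_F2_eq_SL2Z_eq_GL2Z {α : Type} [Fintype α] (L : Language α) :
    (L.IsContextFree ↔ GRecognizable (FreeGroup (Fin 2)) L) ∧
    (GRecognizable (FreeGroup (Fin 2)) L ↔
      GRecognizable (Matrix.SpecialLinearGroup (Fin 2) ℤ) L) ∧
    (GRecognizable (Matrix.SpecialLinearGroup (Fin 2) ℤ) L ↔
      GRecognizable (GL (Fin 2) ℤ) L) := by
  have hSL (h : GRecognizable (FreeGroup (Fin 2)) L) :
      GRecognizable (Matrix.SpecialLinearGroup (Fin 2) ℤ) L :=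
    h.map _ Matrix.SpecialLinearGroup.sanovHom_injective
  have hGL (h : GRecognizable (Matrix.SpecialLinearGroup (Fin 2) ℤ) L) :
      GRecognizable (GL (Fin 2) ℤ) L :=
    h.map _ Matrix.SpecialLinearGroup.toGL_injective
  have hF (h : GRecognizable (GL (Fin 2) ℤ) L) : GRecognizable (FreeGroup (Fin 2)) L := by
    obtain ⟨R, hR, hdec⟩ := Matrix.SpecialLinearGroup.exists_finite_forall_exists_sanovHom_mul
    exact h.of_forall_exists_mul _ (Matrix.SpecialLinearGroup.toGL_injective.comp
      Matrix.SpecialLinearGroup.sanovHom_injective) hR hdec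
  exact ⟨⟨fun h => h.gRecognizable, fun h => h.isContextFree⟩, ⟨hSL, fun h => hF (hGL h)⟩,
    ⟨hGL, fun h => hSL (hF h)⟩⟩
end

section
/- 𝔏(SL(2,ℤ)) is a proper subset of 𝔏(SL(3,ℤ)): every language recognized by an SL(2,ℤ)-automaton is recognized by an SL(3,ℤ)-automaton, and the language MULT = { xᵖ y^q z^{pq} : p, q ≥ 0 } over the alphabet {x, y, z} is recognized by an SL(3,ℤ)-automaton but by no SL(2,ℤ)-automaton. -/
/-- The language `MULT = { xᵖ yᑫ z^{pq} : p, q ≥ 0 }` over the alphabet `{x, y, z}`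
(encoded as `0, 1, 2 : Fin 3`). -/
def MULT : Language (Fin 3) :=
  {w | ∃ p q : ℕ,
    w = List.replicate p 0 ++ List.replicate q 1 ++ List.replicate (p * q) 2}

namespace GAutomaton

variable {α : Type*} {G H : Type*} [Group G] [Group H]

/-- Push the register operations of an automaton forward along a group homomorphism. -/
def map (f : G →* H) (M : GAutomaton α G) : GAutomaton α H where
  Q := M.Q
  finQ := M.finQ
  q0 := M.q0
  acc := M.acc
  δ := (fun t => (t.1, t.2.1, t.2.2.1, f t.2.2.2)) '' M.δ
  finδ := M.finδ.image _

theorem stepsIn_map {f : G →* H} (M : GAutomaton α G) {k : ℕ} {q q' : M.Q} {x x' : G}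
    {w w' : List α} (h : M.StepsIn k (q, x, w) (q', x', w')) :
    (M.map f).StepsIn k (q, f x, w) (q', f x', w') := by
  induction k generalizing q x w with
  | zero =>
    obtain ⟨rfl, rfl, rfl⟩ : q = q' ∧ x = x' ∧ w = w' := by simpa [StepsIn] using h
    rfl
  | succ k ih =>
    obtain ⟨⟨q₁, x₁, w₁⟩, ⟨σ, m, hδ, hx, hw⟩, hs⟩ := h
    refine ⟨(q₁, f x₁, w₁), ⟨σ, f m, ⟨_, hδ, rfl⟩, ?_, hw⟩, ih hs⟩
    simpa using congrArg f hx

theorem stepsIn_of_stepsIn_map {f : G →* H} (hf : Function.Injective f) (M : GAutomaton α G)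
    {k : ℕ} {q q' : M.Q} {x x' : G} {w w' : List α}
    (h : (M.map f).StepsIn k (q, f x, w) (q', f x', w')) :
    M.StepsIn k (q, x, w) (q', x', w') := by
  induction k generalizing q x w with
  | zero =>
    obtain ⟨h₁, h₂, h₃⟩ : q = q' ∧ f x = f x' ∧ w = w' := by
      have h : (q, f x, w) = (q', f x', w') := h
      simpa using h
    rw [h₁, hf h₂, h₃]
    rfl
  | succ k ih =>
    obtain ⟨⟨q₁, y, w₁⟩, ⟨σ, m, ⟨⟨p, τ, p', n⟩, hδ, he⟩, hx, hw⟩, hs⟩ := h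
    cases he
    refine ⟨(q₁, x * n, w₁), ⟨_, n, hδ, rfl, hw⟩, ih ?_⟩
    have hx : y = f x * f n := hx
    rw [map_mul, ← hx]
    exact hs

theorem lang_map {f : G →* H} (hf : Function.Injective f) (M : GAutomaton α G) :
    (M.map f).lang = M.lang := by
  ext w
  constructor
  · rintro ⟨t, k, hk, q, hq, hs⟩
    refine ⟨t, k, hk, q, hq, M.stepsIn_of_stepsIn_map hf ?_⟩
    rw [map_one]
    exact hs
  · rintro ⟨t, k, hk, q, hq, hs⟩
    refine ⟨t, k, hk, q, hq, ?_⟩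
    have := M.stepsIn_map (f := f) hs
    rw [map_one] at this
    exact this

end GAutomaton

theorem GRecognizable.of_injective {α G H : Type*} [Group G] [Group H] {L : Language α}
    (f : G →* H) (hf : Function.Injective f) (h : GRecognizable G L) : GRecognizable H L := by
  obtain ⟨M, rfl⟩ := h
  exact ⟨M.map f, M.lang_map hf⟩

/-- The upper left block embedding of `SL(2,ℤ)` into `SL(3,ℤ)`. -/
def slTwoToThree :
    Matrix.SpecialLinearGroup (Fin 2) ℤ →* Matrix.SpecialLinearGroup (Fin 3) ℤ where
  toFun g := ⟨!![g 0 0, g 0 1, 0; g 1 0, g 1 1, 0; 0, 0, 1], by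
    have h := g.det_coe
    rw [Matrix.det_fin_two] at h
    simpa [Matrix.det_fin_three] using h⟩
  map_one' := by
    ext i j
    fin_cases i <;> fin_cases j <;> simp
  map_mul' g h := by
    apply Subtype.ext
    refine Eq.trans ?_ (Matrix.SpecialLinearGroup.coe_mul _ _).symm
    ext i j
    fin_cases i <;> fin_cases j <;>
      simp [Matrix.mul_apply, Fin.sum_univ_two, Fin.sum_univ_three]

theorem slTwoToThree_injective : Function.Injective slTwoToThree := by
  intro g h hgh
  have key := congrArg Subtype.val hgh
  replace key : !![g 0 0, g 0 1, 0; g 1 0, g 1 1, 0; 0, 0, 1] =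
    !![h 0 0, h 0 1, 0; h 1 0, h 1 1, 0; 0, 0, 1] := key
  ext i j
  fin_cases i <;> fin_cases j
  · simpa using congrFun₂ key 0 0
  · simpa using congrFun₂ key 0 1
  · simpa using congrFun₂ key 1 0
  · simpa using congrFun₂ key 1 1

/-- The Heisenberg group element with the given entries above the diagonal. -/
def heis (a b c : ℤ) : Matrix.SpecialLinearGroup (Fin 3) ℤ :=
  ⟨!![1, a, c; 0, 1, b; 0, 0, 1], by simp [Matrix.det_fin_three]⟩

theorem heis_mul (a b c a' b' c' : ℤ) :
    heis a b c * heis a' b' c' = heis (a + a') (b + b') (c + c' + a * b') := by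
  apply Subtype.ext
  rw [Matrix.SpecialLinearGroup.coe_mul]
  ext i j
  fin_cases i <;> fin_cases j <;>
    simp [heis, Matrix.mul_apply, Fin.sum_univ_three, add_comm, add_assoc]

theorem heis_zero : heis 0 0 0 = 1 := by
  ext i j
  fin_cases i <;> fin_cases j <;> simp [heis]

theorem eq_zero_of_heis_eq_one {a b c : ℤ} (h : heis a b c = 1) : a = 0 ∧ b = 0 ∧ c = 0 := by
  have key (i j : Fin 3) := congrArg (fun m => m.1 i j) h
  refine ⟨?_, ?_, ?_⟩
  · simpa [heis] using key 0 1
  · simpa [heis] using key 1 2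
  · simpa [heis] using key 0 2

/-- The transitions of a Heisenberg automaton for `MULT`: states `0`, `1`, `2` read the three
letters, and states `3`, `4` erase two coordinates of the register without reading. -/
def multTransitions :
    Set (Fin 5 × Option (Fin 3) × Fin 5 × Matrix.SpecialLinearGroup (Fin 3) ℤ) :=
  {(0, some 0, 0, heis 1 0 0), (0, none, 1, heis 0 0 0),
    (1, some 1, 1, heis 0 1 0), (1, none, 2, heis 0 0 0),
    (2, some 2, 2, heis 0 0 (-1)), (2, none, 3, heis 0 0 0),
    (3, none, 3, heis (-1) 0 0), (3, none, 4, heis 0 0 0),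
    (4, none, 4, heis 0 (-1) 0)}

/-- A Heisenberg automaton recognizing `MULT`. -/
def multAutomaton : GAutomaton (Fin 3) (Matrix.SpecialLinearGroup (Fin 3) ℤ) where
  Q := Fin 5
  finQ := inferInstance
  q0 := 0
  acc := {4}
  δ := multTransitions
  finδ := by simp [multTransitions]

/-- What the remaining input has to look like in order to be accepted by `multAutomaton`
from a given state and register. -/
def multInvariant (q : Fin 5) (a c : ℤ) (w : List (Fin 3)) : Prop :=
  match q with
  | 0 => ∃ i j r : ℕ, w = List.replicate i 0 ++ List.replicate j 1 ++ List.replicate r 2 ∧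
      c + (a + i) * j = r
  | 1 => ∃ j r : ℕ, w = List.replicate j 1 ++ List.replicate r 2 ∧ c + a * j = r
  | 2 => ∃ r : ℕ, w = List.replicate r 2 ∧ c = r
  | 3 => w = [] ∧ c = 0
  | 4 => w = [] ∧ a = 0 ∧ c = 0

theorem multInvariant_of_stepsIn {k : ℕ} {q : Fin 5} {a b c : ℤ} {w : List (Fin 3)}
    (h : multAutomaton.StepsIn k (q, heis a b c, w) ((4 : Fin 5), 1, [])) :
    multInvariant q a c w := by
  induction k generalizing q a b c w with
  | zero =>
    replace h : (q, heis a b c, w) = ((4 : Fin 5), 1, []) := h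
    simp only [Prod.mk.injEq] at h
    obtain ⟨rfl, h, rfl⟩ := h
    obtain ⟨rfl, -, rfl⟩ := eq_zero_of_heis_eq_one h
    exact ⟨rfl, rfl, rfl⟩
  | succ k ih =>
    obtain ⟨⟨q₁, y, w₁⟩, ⟨σ, m, hδ, hx, hw⟩, hs⟩ := h
    replace hδ : (q, σ, q₁, m) ∈ multTransitions := hδ
    replace hx : y = heis a b c * m := hx
    rcases hδ with ⟨rfl, rfl, rfl, rfl⟩ | ⟨rfl, rfl, rfl, rfl⟩ | ⟨rfl, rfl, rfl, rfl⟩ |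
      ⟨rfl, rfl, rfl, rfl⟩ | ⟨rfl, rfl, rfl, rfl⟩ | ⟨rfl, rfl, rfl, rfl⟩ |
      ⟨rfl, rfl, rfl, rfl⟩ | ⟨rfl, rfl, rfl, rfl⟩ | ⟨rfl, rfl, rfl, rfl⟩ <;>
    · rw [heis_mul] at hx
      subst hx
      have key := ih hs
      simp only at hw
      subst hw
      simp only [multInvariant] at key ⊢
      first
        | obtain ⟨i, j, r, rfl, hr⟩ := key
          exact ⟨i + 1, j, r, by simp [List.replicate_succ], by push_cast; linarith⟩
        | obtain ⟨j, r, rfl, hr⟩ := key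
          exact ⟨0, j, r, by simp, by push_cast; linarith⟩
        | obtain ⟨j, r, rfl, hr⟩ := key
          exact ⟨j + 1, r, by simp [List.replicate_succ], by push_cast; linarith⟩
        | obtain ⟨r, rfl, hr⟩ := key
          exact ⟨0, r, by simp, by push_cast; linarith⟩
        | obtain ⟨r, rfl, hr⟩ := key
          exact ⟨r + 1, by simp [List.replicate_succ], by push_cast; linarith⟩
        | obtain ⟨rfl, hr⟩ := key
          exact ⟨0, by simp, by push_cast; linarith⟩
        | obtain ⟨rfl, hr⟩ := key
          exact ⟨rfl, by linarith⟩
        | obtain ⟨rfl, ha, hr⟩ := key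
          exact ⟨rfl, by linarith, by linarith⟩

/-- `multAutomaton` has an accepting computation from the given configuration. -/
def MultAccepts (q : Fin 5) (g : Matrix.SpecialLinearGroup (Fin 3) ℤ) (w : List (Fin 3)) :
    Prop :=
  ∃ k, multAutomaton.StepsIn k (q, g, w) ((4 : Fin 5), 1, [])

theorem MultAccepts.epsilon {q q' : Fin 5} {a b c a' b' c' : ℤ} {w : List (Fin 3)}
    (hδ : (q, none, q', heis a' b' c') ∈ multTransitions)
    (h : MultAccepts q' (heis (a + a') (b + b') (c + c' + a * b')) w) :
    MultAccepts q (heis a b c) w := by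
  obtain ⟨k, hk⟩ := h
  exact ⟨k + 1, (q', _, w), ⟨none, _, hδ, (heis_mul ..).symm, rfl⟩, hk⟩

theorem MultAccepts.letter {q q' : Fin 5} {a b c a' b' c' : ℤ} {s : Fin 3} {w : List (Fin 3)}
    (hδ : (q, some s, q', heis a' b' c') ∈ multTransitions)
    (h : MultAccepts q' (heis (a + a') (b + b') (c + c' + a * b')) w) :
    MultAccepts q (heis a b c) (s :: w) := by
  obtain ⟨k, hk⟩ := h
  exact ⟨k + 1, (q', _, w), ⟨some s, _, hδ, (heis_mul ..).symm, rfl⟩, hk⟩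

theorem multAccepts_four (n : ℕ) : MultAccepts 4 (heis 0 n 0) [] := by
  induction n with
  | zero => exact ⟨0, by simp [GAutomaton.StepsIn, heis_zero]⟩
  | succ n ih =>
    refine MultAccepts.epsilon (q' := 4) (a' := 0) (b' := -1) (c' := 0)
      (by simp [multTransitions]) ?_
    simpa using ih

theorem multAccepts_three (m n : ℕ) : MultAccepts 3 (heis m n 0) [] := by
  induction m with
  | zero =>
    refine MultAccepts.epsilon (q' := 4) (a' := 0) (b' := 0) (c' := 0)
      (by simp [multTransitions]) ?_
    simpa using multAccepts_four n
  | succ m ih =>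
    refine MultAccepts.epsilon (q' := 3) (a' := -1) (b' := 0) (c' := 0)
      (by simp [multTransitions]) ?_
    simpa using ih

theorem multAccepts_two (m n r : ℕ) :
    MultAccepts 2 (heis m n r) (List.replicate r 2) := by
  induction r with
  | zero =>
    refine MultAccepts.epsilon (q' := 3) (a' := 0) (b' := 0) (c' := 0)
      (by simp [multTransitions]) ?_
    simpa using multAccepts_three m n
  | succ r ih =>
    refine MultAccepts.letter (q' := 2) (a' := 0) (b' := 0) (c' := -1)
      (by simp [multTransitions]) ?_
    simpa using ih

theorem multAccepts_one (m n r j : ℕ) :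
    MultAccepts 1 (heis m n r) (List.replicate j 1 ++ List.replicate (r + m * j) 2) := by
  induction j generalizing n r with
  | zero =>
    refine MultAccepts.epsilon (q' := 2) (a' := 0) (b' := 0) (c' := 0)
      (by simp [multTransitions]) ?_
    simpa using multAccepts_two m n r
  | succ j ih =>
    refine MultAccepts.letter (q' := 1) (a' := 0) (b' := 1) (c' := 0)
      (by simp [multTransitions]) ?_
    have h := ih (n + 1) (r + m)
    rw [show r + m + m * j = r + m * (j + 1) by ring] at h
    simpa using h

theorem multAccepts_zero (m i j : ℕ) : MultAccepts 0 (heis m 0 0)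
    (List.replicate i 0 ++ List.replicate j 1 ++ List.replicate ((m + i) * j) 2) := by
  induction i generalizing m with
  | zero =>
    refine MultAccepts.epsilon (q' := 1) (a' := 0) (b' := 0) (c' := 0)
      (by simp [multTransitions]) ?_
    simpa using multAccepts_one m 0 0 j
  | succ i ih =>
    refine MultAccepts.letter (q' := 0) (a' := 1) (b' := 0) (c' := 0)
      (by simp [multTransitions]) ?_
    have := ih (m + 1)
    rw [add_assoc, add_comm 1 i] at this
    simpa using this

theorem lang_multAutomaton : multAutomaton.lang = MULT := by
  ext w
  constructor
  · rintro ⟨t, k, -, q, hq, hs⟩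
    obtain rfl : q = (4 : Fin 5) := hq
    rw [← heis_zero] at hs
    nth_rw 2 [heis_zero] at hs
    obtain ⟨i, j, r, rfl, hr⟩ := multInvariant_of_stepsIn (q := 0) hs
    refine ⟨i, j, ?_⟩
    obtain rfl : i * j = r := by
      have : ((i * j : ℕ) : ℤ) = r := by push_cast; linarith
      exact_mod_cast this
    rfl
  · rintro ⟨p, q, rfl⟩
    obtain ⟨k, hk⟩ := multAccepts_zero 0 p q
    rw [zero_add, Nat.cast_zero, heis_zero] at hk
    exact ⟨k, k, le_rfl, (4 : Fin 5), rfl, hk⟩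

namespace ModularGroup

open scoped MatrixGroups

/-- The element `[[0, 1], [-1, 1]]` of order six, stabilizing an ideal triangle of the Farey
tessellation. -/
def V : SL(2, ℤ) := ⟨!![0, 1; -1, 1], by simp [Matrix.det_fin_two_of]⟩

theorem coe_V : (V : Matrix (Fin 2) (Fin 2) ℤ) = !![0, 1; -1, 1] := rfl

theorem V_pow_three : V ^ 3 = S ^ 2 := by decide

theorem T_eq : T = V ^ 2 * S := by decide

/-- The number whose sign tells on which side of the Farey geodesic from `0` to `∞` the
image of the base triangle under `h` lies. -/
def side (h : SL(2, ℤ)) : ℤ :=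
  2 * (h 0 0 * h 1 0 + h 0 1 * h 1 1) + (h 0 0 * h 1 1 + h 0 1 * h 1 0)

theorem side_mul_V (h : SL(2, ℤ)) : side (h * V) = side h := by
  simp [side, coe_V, Matrix.mul_apply, Fin.sum_univ_two]
  ring

theorem side_mul_S (h : SL(2, ℤ)) : side (h * S) =
    2 * (h 0 0 * h 1 0 + h 0 1 * h 1 1) - (h 0 0 * h 1 1 + h 0 1 * h 1 0) := by
  simp [side, Matrix.mul_apply, Fin.sum_univ_two]
  ring

theorem side_mul_of_mem_zpowers_V (h : SL(2, ℤ)) {b : SL(2, ℤ)}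
    (hb : b ∈ Subgroup.zpowers V) : side (h * b) = side h := by
  obtain ⟨n, rfl⟩ := hb
  refine zpow_induction_right (P := fun b => side (h * b) = side h) (by simp) ?_ ?_ n
  · intro a ha
    rw [← mul_assoc, side_mul_V, ha]
  · intro a ha
    rw [← ha, ← side_mul_V (h * (a * V⁻¹))]
    congr 1
    group

theorem mem_zpowers_S_of_side_change {h : SL(2, ℤ)}
    (hh : ¬ (0 < side (h * S) ↔ 0 < side h)) : h ∈ Subgroup.zpowers S := by
  have hdet := h.det_coe
  rw [Matrix.det_fin_two] at hdet
  rw [side_mul_S, side] at hh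
  obtain ⟨a, ha⟩ : ∃ a, h 0 0 = a := ⟨_, rfl⟩
  obtain ⟨b, hb⟩ : ∃ b, h 0 1 = b := ⟨_, rfl⟩
  obtain ⟨c, hc⟩ : ∃ c, h 1 0 = c := ⟨_, rfl⟩
  obtain ⟨d, hd⟩ : ∃ d, h 1 1 = d := ⟨_, rfl⟩
  rw [ha, hb, hc, hd] at hh hdet
  have hlt : 4 * (a * c + b * d) ^ 2 ≤ (a * d + b * c) ^ 2 := by
    by_cases h₁ : 0 < 2 * (a * c + b * d) + (a * d + b * c) <;>
    by_cases h₂ : 0 < 2 * (a * c + b * d) - (a * d + b * c)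
    · exact absurd (iff_of_true h₂ h₁) hh
    · nlinarith
    · nlinarith
    · exact absurd (iff_of_false h₂ h₁) hh
  have hprod : 12 * ((b * c) * (b * c + 1)) ≤ 1 := by
    have had : a * d = b * c + 1 := by linarith
    have : 0 ≤ (a * c - b * d) ^ 2 := sq_nonneg _
    have e : (a * c) * (b * d) = (b * c) * (b * c + 1) := by rw [← had]; ring
    have e' : (a * d + b * c) ^ 2 = 4 * ((b * c) * (b * c + 1)) + 1 := by rw [had]; ring
    nlinarith
  have hbc : b * c = 0 ∨ b * c = -1 := by
    have h₁ : -1 ≤ b * c := by nlinarith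
    have h₂ : b * c ≤ 0 := by nlinarith
    omega
  have hX : a * c + b * d = 0 := by
    have hY : (a * d + b * c) ^ 2 = 1 := by
      have had : a * d = b * c + 1 := by linarith
      rw [had]
      rcases hbc with h | h <;> rw [h] <;> norm_num
    have h₁ : a * c + b * d < 1 := by nlinarith
    have h₂ : -1 < a * c + b * d := by nlinarith
    omega
  have main : (a = 1 ∧ b = 0 ∧ c = 0 ∧ d = 1) ∨ (a = -1 ∧ b = 0 ∧ c = 0 ∧ d = -1) ∨
      (a = 0 ∧ b = 1 ∧ c = -1 ∧ d = 0) ∨ (a = 0 ∧ b = -1 ∧ c = 1 ∧ d = 0) := by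
    rcases hbc with h | h
    · have had : a * d = 1 := by linarith
      rcases Int.eq_one_or_neg_one_of_mul_eq_one' had with ⟨rfl, rfl⟩ | ⟨rfl, rfl⟩ <;>
      rcases mul_eq_zero.1 h with rfl | rfl <;> simp at hX <;> simp [hX]
    · have hbc : b * (-c) = 1 := by linarith
      have had : a * d = 0 := by linarith
      rcases Int.eq_one_or_neg_one_of_mul_eq_one' hbc with ⟨rfl, hc⟩ | ⟨rfl, hc⟩ <;>
      obtain rfl := neg_eq_iff_eq_neg.1 hc <;>
      rcases mul_eq_zero.1 had with rfl | rfl <;> simp at hX <;> simp [hX]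
  rcases main with ⟨rfl, rfl, rfl, rfl⟩ | ⟨rfl, rfl, rfl, rfl⟩ | ⟨rfl, rfl, rfl, rfl⟩ |
    ⟨rfl, rfl, rfl, rfl⟩
  · refine ⟨0, ?_⟩
    ext i j
    fin_cases i <;> fin_cases j <;> simp [*]
  · refine ⟨(2 : ℕ), ?_⟩
    simp only [zpow_natCast]
    ext i j
    fin_cases i <;> fin_cases j <;> simp [*, pow_two]
  · refine ⟨(3 : ℕ), ?_⟩
    simp only [zpow_natCast]
    ext i j
    fin_cases i <;> fin_cases j <;> simp [*, pow_succ]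
  · refine ⟨1, ?_⟩
    ext i j
    fin_cases i <;> fin_cases j <;> simp [*]

theorem mem_zpowers_S_of_side_mul_change {h b : SL(2, ℤ)} (hb : b ∈ Subgroup.zpowers S)
    (hh : ¬ (0 < side (h * b) ↔ 0 < side h)) : h ∈ Subgroup.zpowers S := by
  by_contra hS
  have key {a : SL(2, ℤ)} (ha : a ∈ Subgroup.zpowers S) :
      0 < side (h * a * S) ↔ 0 < side (h * a) := by
    by_contra hc
    exact hS ((Subgroup.mul_mem_cancel_right _ ha).1 (mem_zpowers_S_of_side_change hc))
  have hmem : S ∈ Subgroup.zpowers S := Subgroup.mem_zpowers S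
  obtain ⟨n, rfl⟩ := hb
  refine hh (zpow_induction_right (g := S)
    (P := fun b => b ∈ Subgroup.zpowers S ∧ (0 < side (h * b) ↔ 0 < side h))
    ⟨one_mem _, by simp⟩ ?_ ?_ n).2
  · rintro a ⟨ha, hI⟩
    exact ⟨mul_mem ha hmem, by rw [← mul_assoc, key ha, hI]⟩
  · rintro a ⟨ha, hI⟩
    have ha' := mul_mem ha (inv_mem hmem)
    refine ⟨ha', ?_⟩
    rw [← key ha', ← hI]
    simp [mul_assoc]

theorem mem_zpowers_V_of_mem_zpowers_S {g : SL(2, ℤ)} (hg : g ∈ Subgroup.zpowers S)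
    (hs : 0 < side g ↔ 0 < side 1) : g ∈ Subgroup.zpowers V := by
  have hV (j : ℤ) : (S ^ 2) ^ j ∈ Subgroup.zpowers V := by
    rw [← V_pow_three]
    exact zpow_mem (pow_mem (Subgroup.mem_zpowers V) 3) j
  obtain ⟨n, rfl⟩ := hg
  dsimp only at hs ⊢
  rcases Int.even_or_odd' n with ⟨j, rfl | rfl⟩
  · rw [zpow_mul]
    exact hV j
  · exfalso
    rw [add_comm, zpow_add, zpow_one, zpow_mul] at hs
    have := side_mul_of_mem_zpowers_V S (hV j)
    norm_cast at this hs
    rw [this] at hs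
    simp [side] at hs

/-- The union of the vertex groups `⟨S⟩` and `⟨V⟩` of the amalgam `SL(2,ℤ)`. -/
def vertexElements : Set SL(2, ℤ) := Subgroup.zpowers S ∪ Subgroup.zpowers V

theorem finite_vertexElements : vertexElements.Finite := by
  refine Set.Finite.union ?_ ?_
  · exact finite_zpowers.2 (isOfFinOrder_iff_pow_eq_one.2 ⟨4, by norm_num, by decide⟩)
  · exact finite_zpowers.2 (isOfFinOrder_iff_pow_eq_one.2 ⟨6, by norm_num, by decide⟩)

theorem one_mem_vertexElements : 1 ∈ vertexElements := Or.inl (one_mem _)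

theorem exists_list_prod_eq (g : SL(2, ℤ)) :
    ∃ l : List SL(2, ℤ), (∀ b ∈ l, b ∈ vertexElements) ∧ l.prod = g := by
  have hS : S ∈ Submonoid.closure vertexElements :=
    Submonoid.subset_closure (Or.inl (Subgroup.mem_zpowers S))
  have hS' : S⁻¹ ∈ Submonoid.closure vertexElements :=
    Submonoid.subset_closure (Or.inl (inv_mem (Subgroup.mem_zpowers S)))
  have hV : V ^ 2 ∈ Submonoid.closure vertexElements :=
    Submonoid.subset_closure (Or.inr (pow_mem (Subgroup.mem_zpowers V) 2))
  have hV' : (V ^ 2)⁻¹ ∈ Submonoid.closure vertexElements :=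
    Submonoid.subset_closure (Or.inr (inv_mem (pow_mem (Subgroup.mem_zpowers V) 2)))
  refine Submonoid.exists_list_of_mem_closure ?_
  have hg : g ∈ (Subgroup.closure {S, T}).toSubmonoid := by
    rw [SpecialLinearGroup.SL2Z_generators]
    trivial
  rw [Subgroup.closure_toSubmonoid] at hg
  refine Submonoid.closure_le.2 ?_ hg
  rintro x ((rfl | rfl) | hx)
  · exact hS
  · rw [T_eq]
    exact mul_mem hV hS
  · rw [Set.mem_inv] at hx
    rcases hx with hx | hx
    · rw [inv_eq_iff_eq_inv.1 hx]
      exact hS'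
    · rw [inv_eq_iff_eq_inv.1 hx, T_eq, mul_inv_rev]
      exact mul_mem hS' hV'

theorem exists_side_change {l : List SL(2, ℤ)} {k : SL(2, ℤ)}
    (hl : ∀ b ∈ l, b ∈ vertexElements) (hk : ¬ (0 < side (k * l.prod) ↔ 0 < side k)) :
    ∃ l₁ b l₂, l = l₁ ++ b :: l₂ ∧ k * l₁.prod ∈ Subgroup.zpowers S ∧
      b ∈ Subgroup.zpowers S ∧ ¬ (0 < side (k * l₁.prod * b) ↔ 0 < side (k * l₁.prod)) := by
  induction l generalizing k with
  | nil => simp at hk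
  | cons b l ih =>
    by_cases hb : 0 < side (k * b) ↔ 0 < side k
    · obtain ⟨l₁, b', l₂, rfl, h₁, h₂, h₃⟩ := ih (k := k * b)
        (fun c hc => hl c (List.mem_cons_of_mem _ hc))
        (by rwa [hb, mul_assoc, ← List.prod_cons])
      refine ⟨b :: l₁, b', l₂, rfl, ?_, h₂, ?_⟩
      · rwa [List.prod_cons, ← mul_assoc]
      · rwa [List.prod_cons, ← mul_assoc]
    · have hbS : b ∈ Subgroup.zpowers S := by
        rcases hl b List.mem_cons_self with h | h
        · exact h
        · rw [side_mul_of_mem_zpowers_V k h] at hb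
          exact absurd Iff.rfl hb
      exact ⟨[], b, l, rfl, by simpa using mem_zpowers_S_of_side_mul_change hbS hb, hbS,
        by simpa using hb⟩

/-- A closed polygon in the Cayley graph of `SL(2,ℤ)` with respect to `vertexElements` has a
triangle on each of its sides. -/
theorem exists_split {l : List SL(2, ℤ)} (hl : ∀ b ∈ l, b ∈ vertexElements)
    (hlen : 2 ≤ l.length) (hprod : l.prod ∈ vertexElements) :
    ∃ l₁ l₂, l = l₁ ++ l₂ ∧ l₁ ≠ [] ∧ l₂ ≠ [] ∧
      l₁.prod ∈ vertexElements ∧ l₂.prod ∈ vertexElements := by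
  have split {K : Subgroup SL(2, ℤ)} (hK : ∀ g ∈ K, g ∈ vertexElements) (hg : l.prod ∈ K)
      {l₁ l₂ : List SL(2, ℤ)} (h : l = l₁ ++ l₂) (h₁ : l₁ ≠ []) (h₂ : l₂ ≠ [])
      (hmem : l₁.prod ∈ K) : ∃ l₁ l₂, l = l₁ ++ l₂ ∧ l₁ ≠ [] ∧ l₂ ≠ [] ∧
        l₁.prod ∈ vertexElements ∧ l₂.prod ∈ vertexElements := by
    refine ⟨l₁, l₂, h, h₁, h₂, hK _ hmem, hK _ ?_⟩
    rw [h, List.prod_append] at hg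
    exact (Subgroup.mul_mem_cancel_left _ hmem).1 hg
  have hKS : ∀ g ∈ Subgroup.zpowers S, g ∈ vertexElements := fun _ => Or.inl
  have hKV : ∀ g ∈ Subgroup.zpowers V, g ∈ vertexElements := fun _ => Or.inr
  obtain ⟨a, t, rfl⟩ : ∃ a t, l = a :: t := List.exists_cons_of_length_pos (by omega)
  have ht : t ≠ [] := by
    rintro rfl
    simp at hlen
  have ha := hl a List.mem_cons_self
  by_cases hgS : (a :: t).prod ∈ Subgroup.zpowers S
  · by_cases hside : 0 < side (a :: t).prod ↔ 0 < side 1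
    · have hgV := mem_zpowers_V_of_mem_zpowers_S hgS hside
      rcases ha with ha | ha
      · exact split hKS hgS (l₁ := [a]) rfl (by simp) ht (by simpa using ha)
      · exact split hKV hgV (l₁ := [a]) rfl (by simp) ht (by simpa using ha)
    · obtain ⟨l₁, b, l₂, h, hmem, hb, -⟩ := exists_side_change (k := 1) hl (by rwa [one_mul])
      rw [one_mul] at hmem
      rcases eq_or_ne l₁ [] with rfl | h₁
      · obtain ⟨rfl, rfl⟩ : a = b ∧ t = l₂ := by simpa using h
        exact split hKS hgS (l₁ := [a]) rfl (by simp) ht (by simpa using hb)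
      · exact split hKS hgS h h₁ (by simp) hmem
  · have hgV : (a :: t).prod ∈ Subgroup.zpowers V := hprod.resolve_left hgS
    by_cases haV : a ∈ Subgroup.zpowers V
    · exact split hKV hgV (l₁ := [a]) rfl (by simp) ht (by simpa using haV)
    have haS := ha.resolve_right haV
    obtain ⟨m, e, rfl⟩ : ∃ m e, t = m ++ [e] :=
      ⟨t.dropLast, t.getLast ht, (List.dropLast_append_getLast ht).symm⟩
    have hprod_eq : (a :: (m ++ [e])).prod = a * m.prod * e := by simp [mul_assoc]
    by_cases heV : e ∈ Subgroup.zpowers V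
    · refine split hKV hgV (l₁ := a :: m) (l₂ := [e]) (by simp) (by simp) (by simp) ?_
      rw [hprod_eq] at hgV
      simpa using (Subgroup.mul_mem_cancel_right _ heV).1 hgV
    have heS := (hl e (by simp)).resolve_right heV
    have hend : 0 < side (a * m.prod) ↔ 0 < side 1 := by
      have h₁ : side (a :: (m ++ [e])).prod = side 1 := by
        simpa using side_mul_of_mem_zpowers_V 1 hgV
      rw [← h₁]
      by_contra hc
      refine hgS (mem_zpowers_S_of_side_mul_change (inv_mem heS) ?_)
      rwa [hprod_eq, mul_inv_cancel_right, ← hprod_eq]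
    have hstart : ¬ (0 < side a ↔ 0 < side 1) :=
      fun h => haV (mem_zpowers_V_of_mem_zpowers_S haS h)
    obtain ⟨m₁, b, m₂, rfl, hmem, hb, hc⟩ := exists_side_change (l := m) (k := a)
      (fun b hb => hl b (by simp [hb])) (by tauto)
    by_cases h₁ : 0 < side (a * m₁.prod) ↔ 0 < side 1
    · refine split hKV hgV (l₁ := a :: m₁) (l₂ := b :: m₂ ++ [e]) (by simp) (by simp)
        (by simp) ?_
      simpa using mem_zpowers_V_of_mem_zpowers_S hmem h₁
    · refine split hKV hgV (l₁ := a :: (m₁ ++ [b])) (l₂ := m₂ ++ [e]) (by simp) (by simp)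
        (by simp) ?_
      have := mem_zpowers_V_of_mem_zpowers_S (mul_mem hmem hb) (by tauto)
      simpa [mul_assoc] using this

end ModularGroup

section Runs

variable {X G α : Type*}

/-- A path in a graph with vertex set `X` whose edges carry a group element and a multiset of
letters: `EdgeRun E l x y u` says that some path from `x` to `y` has the list `l` of group
labels and total letter content `u`. -/
inductive EdgeRun (E : X → X → G → Multiset α → Prop) :
    List G → X → X → Multiset α → Prop
  | nil (x : X) : EdgeRun E [] x x 0
  | cons {x y z : X} {g : G} {l : List G} {u v : Multiset α} (he : E x y g u)
      (h : EdgeRun E l y z v) : EdgeRun E (g :: l) x z (u + v)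

variable {E : X → X → G → Multiset α → Prop}

theorem EdgeRun.append {l₁ l₂ : List G} {x y z : X} {u v : Multiset α}
    (h₁ : EdgeRun E l₁ x y u) (h₂ : EdgeRun E l₂ y z v) :
    EdgeRun E (l₁ ++ l₂) x z (u + v) := by
  induction h₁ with
  | nil => simpa using h₂
  | cons he _ ih =>
    rw [add_assoc]
    exact .cons he (ih h₂)

theorem EdgeRun.exists_of_append {l₁ l₂ : List G} {x z : X} {w : Multiset α}
    (h : EdgeRun E (l₁ ++ l₂) x z w) :
    ∃ y u v, EdgeRun E l₁ x y u ∧ EdgeRun E l₂ y z v ∧ w = u + v := by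
  induction l₁ generalizing x w with
  | nil => exact ⟨x, 0, w, .nil x, h, by simp⟩
  | cons g l₁ ih =>
    cases h with
    | cons he h =>
      obtain ⟨y, u, v, h₁, h₂, rfl⟩ := ih h
      exact ⟨y, _, v, .cons he h₁, h₂, by rw [add_assoc]⟩

theorem EdgeRun.label_mem {B : Set G} (hB : ∀ x y g u, E x y g u → g ∈ B) {l : List G}
    {x y : X} {u : Multiset α} (h : EdgeRun E l x y u) : ∀ g ∈ l, g ∈ B := by
  induction h with
  | nil => simp
  | cons he _ ih => simpa using ⟨hB _ _ _ _ he, ih⟩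

theorem EdgeRun.target_mem {F : Set X} (hF : ∀ x y g u, E x y g u → y ∈ F) {l : List G}
    {x y : X} {u : Multiset α} (h : EdgeRun E l x y u) (hx : x ∈ F) : y ∈ F := by
  induction h with
  | nil => exact hx
  | cons he _ ih => exact ih (hF _ _ _ _ he)

theorem EdgeRun.card_le_length (hE : ∀ x y g u, E x y g u → u.card ≤ 1) {l : List G}
    {x y : X} {u : Multiset α} (h : EdgeRun E l x y u) : u.card ≤ l.length := by
  induction h with
  | nil => simp
  | cons he _ ih =>
    have := hE _ _ _ _ he
    simp only [Multiset.card_add, List.length_cons]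
    omega

variable [Group G]

/-- `Derives E (x, y, g) u`: some path from `x` to `y` has product `g` and content `u`. -/
def Derives (E : X → X → G → Multiset α → Prop) (A : X × X × G) (u : Multiset α) : Prop :=
  ∃ l, EdgeRun E l A.1 A.2.1 u ∧ l.prod = A.2.2

/-- A derivation of `v` from `A` has a subderivation of `u` from `A'` which may be replaced by
any other one. -/
def DerivesWithin (E : X → X → G → Multiset α → Prop) (A : X × X × G) (v : Multiset α)
    (A' : X × X × G) (u : Multiset α) : Prop :=
  ∃ c, v = c + u ∧ ∀ u', Derives E A' u' → Derives E A (c + u')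

theorem DerivesWithin.refl (A : X × X × G) (v : Multiset α) : DerivesWithin E A v A v :=
  ⟨0, by simp, fun u' h => by simpa using h⟩

theorem DerivesWithin.trans {A A' A'' : X × X × G} {v v' v'' : Multiset α}
    (h : DerivesWithin E A v A' v') (h' : DerivesWithin E A' v' A'' v'') :
    DerivesWithin E A v A'' v'' := by
  obtain ⟨c, rfl, hc⟩ := h
  obtain ⟨c', rfl, hc'⟩ := h'
  exact ⟨c + c', by rw [add_assoc], fun u' hu => by
    rw [add_assoc]
    exact hc _ (hc' _ hu)⟩

/-- The set `B` triangulates: products of elements of `B` landing in `B` can be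
split into two shorter products in `B`. -/
def Triangulates (B : Set G) : Prop :=
  ∀ l : List G, (∀ b ∈ l, b ∈ B) → 2 ≤ l.length → l.prod ∈ B →
    ∃ l₁ l₂, l = l₁ ++ l₂ ∧ l₁ ≠ [] ∧ l₂ ≠ [] ∧ l₁.prod ∈ B ∧ l₂.prod ∈ B

variable {B : Set G} {F : Set X}

theorem EdgeRun.exists_heavy_part (hB : Triangulates B)
    (hE : ∀ x y g u, E x y g u → y ∈ F ∧ g ∈ B ∧ u.card ≤ 1) {l : List G} {x y : X}
    {v : Multiset α} (h : EdgeRun E l x y v) (hx : x ∈ F) (hl : l.prod ∈ B)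
    (hv : 2 ≤ v.card) :
    ∃ A u, A ∈ F ×ˢ F ×ˢ B ∧ Derives E A u ∧ DerivesWithin E (x, y, l.prod) v A u ∧
      u.card < v.card ∧ v.card ≤ 2 * u.card := by
  induction hn : l.length using Nat.strong_induction_on generalizing l x y v with
  | _ n ih =>
    have hlen : 2 ≤ l.length :=
      hv.trans (h.card_le_length fun x y g u he => (hE x y g u he).2.2)
    have hy : y ∈ F := h.target_mem (fun x y g u he => (hE x y g u he).1) hx
    obtain ⟨l₁, l₂, rfl, h₁, h₂, hm₁, hm₂⟩ :=
      hB l (h.label_mem fun x y g u he => (hE x y g u he).2.1) hlen hl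
    obtain ⟨z, u₁, u₂, r₁, r₂, rfl⟩ := h.exists_of_append
    have hz : z ∈ F := r₁.target_mem (fun x y g u he => (hE x y g u he).1) hx
    have hlt₁ : l₁.length < n := by
      have := List.length_pos_iff.2 h₂
      simp only [List.length_append] at hn
      omega
    have hlt₂ : l₂.length < n := by
      have := List.length_pos_iff.2 h₁
      simp only [List.length_append] at hn
      omega
    have hd₁ : DerivesWithin E (x, y, (l₁ ++ l₂).prod) (u₁ + u₂) (x, z, l₁.prod) u₁ := by
      refine ⟨u₂, add_comm _ _, ?_⟩
      rintro u' ⟨l', hr, hl'⟩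
      exact ⟨l' ++ l₂, by rw [add_comm]; exact hr.append r₂, by simp [hl']⟩
    have hd₂ : DerivesWithin E (x, y, (l₁ ++ l₂).prod) (u₁ + u₂) (z, y, l₂.prod) u₂ := by
      refine ⟨u₁, rfl, ?_⟩
      rintro u' ⟨l', hr, hl'⟩
      exact ⟨l₁ ++ l', r₁.append hr, by simp [hl']⟩
    rw [Multiset.card_add] at hv ⊢
    rcases Multiset.empty_or_exists_mem u₁ with rfl | hne₁
    · rw [zero_add] at hd₂ ⊢
      rw [Multiset.card_zero, zero_add] at hv ⊢
      obtain ⟨A, u, hA, hd, hw, hu⟩ := ih _ hlt₂ r₂ hz hm₂ hv rfl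
      exact ⟨A, u, hA, hd, hd₂.trans hw, hu⟩
    rcases Multiset.empty_or_exists_mem u₂ with rfl | hne₂
    · rw [add_zero] at hd₁ ⊢
      rw [Multiset.card_zero, add_zero] at hv ⊢
      obtain ⟨A, u, hA, hd, hw, hu⟩ := ih _ hlt₁ r₁ hx hm₁ hv rfl
      exact ⟨A, u, hA, hd, hd₁.trans hw, hu⟩
    have hc₁ := Multiset.card_pos_iff_exists_mem.2 hne₁
    have hc₂ := Multiset.card_pos_iff_exists_mem.2 hne₂
    rcases le_total u₁.card u₂.card with hle | hle
    · exact ⟨_, u₂, ⟨hz, hy, hm₂⟩, ⟨l₂, r₂, rfl⟩, hd₂, by omega, by omega⟩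
    · exact ⟨_, u₁, ⟨hx, hz, hm₁⟩, ⟨l₁, r₁, rfl⟩, hd₁, by omega, by omega⟩

/-- Starting from a derivation of a large multiset, one can find a subderivation whose size
lies in a prescribed dyadic range. -/
theorem Derives.exists_within_range (hB : Triangulates B)
    (hE : ∀ x y g u, E x y g u → y ∈ F ∧ g ∈ B ∧ u.card ≤ 1) {A : X × X × G}
    {v : Multiset α} (h : Derives E A v) (hA : A ∈ F ×ˢ F ×ˢ B) {m : ℕ} (hm : 1 ≤ m)
    (hv : m < v.card) :
    ∃ A' u, A' ∈ F ×ˢ F ×ˢ B ∧ Derives E A' u ∧ DerivesWithin E A v A' u ∧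
      m < u.card ∧ u.card ≤ 2 * m := by
  induction hn : v.card using Nat.strong_induction_on generalizing A v with
  | _ n ih =>
    by_cases hle : v.card ≤ 2 * m
    · exact ⟨A, v, hA, h, .refl A v, hv, hle⟩
    obtain ⟨x, y, g⟩ := A
    obtain ⟨l, hr, rfl⟩ := h
    obtain ⟨A', u, hA', hd, hw, hlt, hu⟩ :=
      hr.exists_heavy_part hB hE hA.1 hA.2.2 (by omega)
    obtain ⟨A'', u', hA'', hd', hw', hu'⟩ := ih u.card (by omega) hd hA' (by omega) rfl
    exact ⟨A'', u', hA'', hd', hw.trans hw', hu'⟩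

/-- A derivation of a large multiset contains a chain of nested subderivations of strictly
decreasing sizes. -/
theorem Derives.exists_chain (hB : Triangulates B)
    (hE : ∀ x y g u, E x y g u → y ∈ F ∧ g ∈ B ∧ u.card ≤ 1) (n : ℕ) {A : X × X × G}
    {v : Multiset α} (h : Derives E A v) (hA : A ∈ F ×ˢ F ×ˢ B) (hv : 2 ^ n < v.card) :
    ∃ (a : ℕ → X × X × G) (u : ℕ → Multiset α), a 0 = A ∧ u 0 = v ∧
      (∀ i ≤ n, a i ∈ F ×ˢ F ×ˢ B ∧ Derives E (a i) (u i)) ∧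
      ∀ i j, i < j → j ≤ n →
        DerivesWithin E (a i) (u i) (a j) (u j) ∧ (u j).card < (u i).card := by
  induction n generalizing A v with
  | zero =>
    exact ⟨fun _ => A, fun _ => v, rfl, rfl, fun i _ => ⟨hA, h⟩, fun i j _ _ => by omega⟩
  | succ n ih =>
    have hpos : 1 ≤ 2 ^ n := Nat.one_le_two_pow
    rw [pow_succ] at hv
    obtain ⟨x, y, g⟩ := A
    obtain ⟨l, hr, rfl⟩ := id h
    obtain ⟨A', v', hA', hd, hw, hlt, hv'⟩ :=
      hr.exists_heavy_part hB hE hA.1 hA.2.2 (by omega)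
    obtain ⟨a, u, rfl, rfl, hau, hchain⟩ := ih hd hA' (by omega)
    refine ⟨fun i => Nat.casesOn i (x, y, l.prod) a, fun i => Nat.casesOn i v u, rfl, rfl,
      ?_, ?_⟩
    · rintro (_ | i) hi
      · exact ⟨hA, h⟩
      · exact hau i (by omega)
    · rintro i (_ | j) hij hj
      · omega
      rcases i with _ | i
      · rcases j with _ | j
        · exact ⟨hw, hlt⟩
        · obtain ⟨h₁, h₂⟩ := hchain 0 (j + 1) (by omega) (by omega)
          exact ⟨hw.trans h₁, h₂.trans hlt⟩
      · exact hchain i j (by omega) (by omega)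

/-- Shrinking lemma: every sufficiently large derivable multiset can be made smaller by a
bounded amount. -/
theorem exists_shrinking_bound (hB : Triangulates B) (hBfin : B.Finite) (hFfin : F.Finite)
    (hE : ∀ x y g u, E x y g u → y ∈ F ∧ g ∈ B ∧ u.card ≤ 1) :
    ∃ N : ℕ, ∀ A ∈ F ×ˢ F ×ˢ B, ∀ v, Derives E A v → N < v.card →
      ∃ v' < v, v.card ≤ v'.card + N ∧ Derives E A v' := by
  have hfin : (F ×ˢ F ×ˢ B).Finite := hFfin.prod (hFfin.prod hBfin)
  let n := hfin.toFinset.card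
  refine ⟨2 * 2 ^ n, fun A hA v hd hv => ?_⟩
  obtain ⟨A', v', hA', hd', hw, hlt, hle⟩ :=
    hd.exists_within_range hB hE hA (m := 2 ^ n) Nat.one_le_two_pow (by omega)
  obtain ⟨a, u, rfl, rfl, hau, hchain⟩ := hd'.exists_chain hB hE n hA' hlt
  obtain ⟨i, hi, j, hj, hne, hij⟩ : ∃ i ∈ Finset.range (n + 1), ∃ j ∈ Finset.range (n + 1),
      i ≠ j ∧ a i = a j := by
    refine Finset.exists_ne_map_eq_of_card_lt_of_maps_to (t := hfin.toFinset) (by simp [n]) ?_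
    intro i hi
    rw [Finset.mem_coe, Finset.mem_range] at hi
    exact hfin.mem_toFinset.2 (hau i (by omega)).1
  wlog hlt' : i < j generalizing i j
  · exact this j hj i hi hne.symm hij.symm (by omega)
  rw [Finset.mem_range] at hi hj
  have hwi : DerivesWithin E A v (a i) (u i) ∧ (u i).card ≤ (u 0).card := by
    rcases Nat.eq_zero_or_pos i with rfl | hpos
    · exact ⟨hw, le_rfl⟩
    · obtain ⟨h₁, h₂⟩ := hchain 0 i hpos (by omega)
      exact ⟨hw.trans h₁, h₂.le⟩
  obtain ⟨⟨c, rfl, hc⟩, hcard⟩ := hwi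
  obtain ⟨⟨d, hd', -⟩, hcard'⟩ := hchain i j hlt' (by omega)
  refine ⟨c + u j, ?_, ?_, hc _ (hij ▸ (hau j (by omega)).2)⟩
  · refine lt_of_le_of_ne ?_ fun h => ?_
    · rw [hd']
      gcongr
      exact Multiset.le_add_left _ _
    · have := congrArg Multiset.card h
      simp only [Multiset.card_add] at this
      omega
  · simp only [Multiset.card_add]
    omega

end Runs

namespace GAutomaton

variable {α G : Type*} [Group G]

/-- The multiset of letters consumed by a transition. -/
def content : Option α → Multiset α
  | none => 0
  | some s => {s}

/-- Subdivision of the transitions of `M` along factorizations of the register operations: a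
vertex consists of a state and the list of factors still to be multiplied. -/
inductive RefinedEdge (M : GAutomaton α G) (word : G → List G) :
    M.Q × List G → M.Q × List G → G → Multiset α → Prop
  | read {q q' : M.Q} {σ : Option α} {m : G} (h : (q, σ, q', m) ∈ M.δ) :
      RefinedEdge M word (q, []) (q', word m) 1 (content σ)
  | multiply {q : M.Q} {a : G} {r : List G} (h : ∃ t ∈ M.δ, a :: r <:+ word t.2.2.2) :
      RefinedEdge M word (q, a :: r) (q, r) a 0

variable {M : GAutomaton α G} {word : G → List G}

/-- The vertices occurring in the subdivision. -/
def refinedVertices (M : GAutomaton α G) (word : G → List G) : Set (M.Q × List G) :=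
  Set.univ ×ˢ insert [] (⋃ t ∈ M.δ, {r | r <:+ word t.2.2.2})

theorem finite_refinedVertices : (M.refinedVertices word).Finite := by
  have := M.finQ
  refine Set.finite_univ.prod (Set.Finite.insert _ (M.finδ.biUnion fun t _ => ?_))
  refine (List.finite_toSet (word t.2.2.2).tails).subset fun r hr => ?_
  simpa using hr

theorem RefinedEdge.bounds {B : Set G} (h₁ : 1 ∈ B) (hB : ∀ g, ∀ b ∈ word g, b ∈ B)
    (x y : M.Q × List G) (g : G) (u : Multiset α) (h : RefinedEdge M word x y g u) :
    y ∈ M.refinedVertices word ∧ g ∈ B ∧ u.card ≤ 1 := by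
  cases h with
  | @read q q' σ m h =>
    refine ⟨⟨trivial, Or.inr (Set.mem_biUnion h (List.suffix_refl _))⟩, h₁, ?_⟩
    cases σ <;> simp [content]
  | @multiply q _ r h =>
    obtain ⟨t, ht, hs⟩ := h
    exact ⟨⟨trivial, Or.inr (Set.mem_biUnion ht ((List.suffix_cons g r).trans hs))⟩,
      hB _ g (hs.subset List.mem_cons_self), by simp⟩

theorem edgeRun_word {t : M.Q × Option α × M.Q × G} (ht : t ∈ M.δ) (q : M.Q) {r : List G}
    (hr : r <:+ word t.2.2.2) : EdgeRun (RefinedEdge M word) r (q, r) (q, []) 0 := by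
  induction r with
  | nil => exact .nil _
  | cons a r ih =>
    simpa using EdgeRun.cons (.multiply ⟨t, ht, hr⟩) (ih ((List.suffix_cons a r).trans hr))

theorem exists_edgeRun_of_stepsIn (hword : ∀ g, (word g).prod = g) {k : ℕ} {q q' : M.Q}
    {x y : G} {w : List α} (h : M.StepsIn k (q, x, w) (q', y, [])) :
    ∃ l, EdgeRun (RefinedEdge M word) l (q, []) (q', []) (w : Multiset α) ∧
      x * l.prod = y := by
  induction k generalizing q x w with
  | zero =>
    obtain ⟨rfl, rfl, rfl⟩ : q = q' ∧ x = y ∧ w = [] := by simpa [StepsIn] using h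
    exact ⟨[], .nil _, by simp⟩
  | succ k ih =>
    obtain ⟨⟨q₁, x₁, w₁⟩, ⟨σ, m, hδ, hx, hw⟩, hs⟩ := h
    replace hx : x₁ = x * m := hx
    subst hx
    obtain ⟨l, hr, hl⟩ := ih hs
    refine ⟨1 :: (word m ++ l), ?_, by simp [hword, ← hl, mul_assoc]⟩
    have hrun := EdgeRun.cons (.read hδ)
      ((edgeRun_word (word := word) hδ q₁ (List.suffix_refl _)).append hr)
    convert hrun using 1
    cases σ with
    | none =>
      replace hw : w₁ = w := hw
      simp [content, hw]
    | some s =>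
      replace hw : w = s :: w₁ := hw
      simp [content, hw]

theorem exists_stepsIn_of_edgeRun (hword : ∀ g, (word g).prod = g) {l : List G}
    {v v' : M.Q × List G} {u : Multiset α} (h : EdgeRun (RefinedEdge M word) l v v' u)
    (hv' : v'.2 = []) : ∃ (w : List α) (k : ℕ), (w : Multiset α) = u ∧
      ∀ x, M.StepsIn k (v.1, x * v.2.prod, w) (v'.1, x * l.prod, []) := by
  induction h with
  | nil v => exact ⟨[], 0, rfl, fun x => by simp [StepsIn, hv']⟩
  | @cons _ _ _ g _ _ _ he _ ih =>
    obtain ⟨w, k, rfl, hk⟩ := ih hv'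
    cases he with
    | @read q q' σ m hδ =>
      refine ⟨σ.toList ++ w, k + 1, ?_, fun x => ?_⟩
      · cases σ <;> simp [content]
      · refine ⟨(q', x * m, w), ⟨σ, m, hδ, by simp, ?_⟩, ?_⟩
        · cases σ <;> simp
        · simpa [hword] using hk x
    | multiply =>
      refine ⟨w, k, by simp, fun x => ?_⟩
      simpa [mul_assoc] using hk (x * g)

/-- Shrinking lemma for automata over a group with a finite triangulating generating set: the
letters of a long accepted word can be rearranged, after deleting a bounded nonzero number of
them, to an accepted word. -/
theorem exists_shrinking_bound {B : Set G} (hB : Triangulates B) (hBfin : B.Finite)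
    (h₁ : 1 ∈ B) (hgen : ∀ g : G, ∃ l : List G, (∀ b ∈ l, b ∈ B) ∧ l.prod = g)
    (M : GAutomaton α G) :
    ∃ N : ℕ, ∀ w ∈ M.lang, N < w.length → ∃ w' ∈ M.lang,
      (w' : Multiset α) < w ∧ w.length ≤ w'.length + N := by
  choose word hwB hword using hgen
  obtain ⟨N, hN⟩ := _root_.exists_shrinking_bound hB hBfin
    (finite_refinedVertices (M := M) (word := word)) (RefinedEdge.bounds h₁ hwB)
  refine ⟨N, ?_⟩
  rintro w ⟨t, k, -, q, hq, hs⟩ hlen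
  obtain ⟨l, hr, hl⟩ := exists_edgeRun_of_stepsIn hword hs
  rw [one_mul] at hl
  obtain ⟨u, hlt, hcard, l', hr', hl'⟩ := hN ((M.q0, []), (q, []), 1)
    ⟨⟨trivial, Or.inl rfl⟩, ⟨trivial, Or.inl rfl⟩, h₁⟩ w ⟨l, hr, hl⟩ hlen
  obtain ⟨w', k', rfl, hk'⟩ := exists_stepsIn_of_edgeRun hword hr' rfl
  refine ⟨w', ⟨k', k', le_rfl, q, hq, ?_⟩, hlt, hcard⟩
  have := hk' 1
  rw [hl'] at this
  simpa using this

end GAutomaton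

theorem not_gRecognizable_MULT :
    ¬ GRecognizable (Matrix.SpecialLinearGroup (Fin 2) ℤ) MULT := by
  rintro ⟨M, hM⟩
  obtain ⟨N, hN⟩ := M.exists_shrinking_bound
    (fun _ hl hlen hprod => ModularGroup.exists_split hl hlen hprod)
    ModularGroup.finite_vertexElements ModularGroup.one_mem_vertexElements
    ModularGroup.exists_list_prod_eq
  rw [hM] at hN
  obtain ⟨_, ⟨p, q, rfl⟩, hlt, hle⟩ := hN _ ⟨N + 1, N + 1, rfl⟩ (by simp; omega)
  have hcount (s : Fin 3) := Multiset.count_le_of_le s hlt.le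
  have hp : p ≤ N + 1 := by simpa [List.count_replicate] using hcount 0
  have hq : q ≤ N + 1 := by simpa [List.count_replicate] using hcount 1
  have hcard := Multiset.card_lt_card hlt
  simp only [Multiset.coe_card, List.length_append, List.length_replicate] at hcard hle
  rcases Nat.lt_or_ge p (N + 1) with hp' | hp'
  · nlinarith [Nat.mul_le_mul (Nat.le_of_lt_succ hp') hq]
  · obtain rfl : p = N + 1 := le_antisymm hp hp'
    rcases Nat.lt_or_ge q (N + 1) with hq' | hq'
    · nlinarith
    · obtain rfl : q = N + 1 := le_antisymm hq hq'
      omega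

/-- `𝔏(SL(2,ℤ)) ⊊ 𝔏(SL(3,ℤ))`. -/
theorem SL2Z_lt_SL3Z :
    (∀ (α : Type) [Fintype α] (L : Language α),
      GRecognizable (Matrix.SpecialLinearGroup (Fin 2) ℤ) L →
        GRecognizable (Matrix.SpecialLinearGroup (Fin 3) ℤ) L) ∧
    GRecognizable (Matrix.SpecialLinearGroup (Fin 3) ℤ) MULT ∧
    ¬ GRecognizable (Matrix.SpecialLinearGroup (Fin 2) ℤ) MULT := by
  exact ⟨fun _ _ _ h => h.of_injective slTwoToThree slTwoToThree_injective,
    ⟨multAutomaton, lang_multAutomaton⟩, not_gRecognizable_MULT⟩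
end
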